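/- arXiv:1801.03340 — 7 statements merged into one kernel-verified Lean document; each statement's English description precedes it below -/
import Mathlib

section
/- For the ferromagnetic nearest-neighbor Ising model on the rooted Cayley tree in which every vertex has exactly d children (d ≥ 2), at the critical inverse temperature β = β_c = arctanh(1/d) there exist constants c, C > 0 such that for all integers n ≥ 1 the root magnetization with plus boundary condition satisfies c·n^{-1/2} < ⟨σ_0⟩_n^+ < C·n^{-1/2}; that is, the critical 1-arm exponent equals 1/2. -/
/-!
Ising model on the rooted Cayley tree in which every vertex has exactly `d` children.
Vertices at generation `k ≤ n` are encoded as words of length `k` over `Fin d`.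
-/

/-- Vertices of the rooted `d`-ary tree of height `n`: a vertex at generation `k`
is a function `Fin k → Fin d` (a word of length `k`). -/
def TreeVtx (d n : ℕ) : Type := Σ k : Fin (n + 1), Fin (k : ℕ) → Fin d

instance (d n : ℕ) : Fintype (TreeVtx d n) :=
  inferInstanceAs (Fintype (Σ k : Fin (n + 1), Fin (k : ℕ) → Fin d))

instance (d n : ℕ) : DecidableEq (TreeVtx d n) :=
  inferInstanceAs (DecidableEq (Σ k : Fin (n + 1), Fin (k : ℕ) → Fin d))

/-- Spin configurations on the finite volume `V_n`. -/
def Config (d n : ℕ) : Type := TreeVtx d n → Bool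

instance (d n : ℕ) : Fintype (Config d n) :=
  inferInstanceAs (Fintype (TreeVtx d n → Bool))

/-- The spin value `±1` associated to a Boolean. -/
def spin (b : Bool) : ℝ := if b then 1 else -1

/-- The root of the tree. -/
def treeRoot (d n : ℕ) : TreeVtx d n := ⟨0, fun i => i.elim0⟩

/-- The Hamiltonian with plus boundary condition on the volume `V_n`:
`H_n^+(σ) = −Σ_{{x,y}∈L_n} σ_x σ_y − Σ_{x∈W_n} d·σ_x`, where the edges of `L_n`
are the parent–child pairs within `V_n`, and each vertex of the boundary
generation `W_n` has its `d` children frozen to `+1`. -/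
noncomputable def hamiltonianPlus (d n : ℕ) (σ : Config d n) : ℝ :=
  -(∑ k : Fin n, ∑ f : Fin ((k : ℕ) + 1) → Fin d,
      spin (σ ⟨k.succ, f⟩) * spin (σ ⟨k.castSucc, fun i => f i.castSucc⟩))
    - ∑ f : Fin n → Fin d, (d : ℝ) * spin (σ ⟨Fin.last n, f⟩)

/-- The root magnetization `⟨σ_0⟩_n^+` at inverse temperature `β`:
the expectation of the root spin under the Gibbs measure
`μ_n^+(σ) = e^{−β H_n^+(σ)} / Z_n^+`. -/
noncomputable def rootMagnetization (d n : ℕ) (β : ℝ) : ℝ :=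
  (∑ σ : Config d n, spin (σ (treeRoot d n)) * Real.exp (-β * hamiltonianPlus d n σ)) /
    ∑ σ : Config d n, Real.exp (-β * hamiltonianPlus d n σ)


/-- The critical inverse temperature `β_c = arctanh (1/d) = (1/2)·log((d+1)/(d−1))`. -/
noncomputable def betaCrit (d : ℕ) : ℝ := (1 / 2) * Real.log (((d : ℝ) + 1) / ((d : ℝ) - 1))

/-!
Summing out the spins of the last generation leaves an Ising model on the smaller tree whose leaves
carry a one-spin weight. Along one edge the mean of a one-spin weight is multiplied by `tanh β`, and
multiplying the weights contributed by `d` children adds the means under the addition formula of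
`tanh`. Hence the root magnetizations are the iterates, starting from `1`, of
`m ↦ tanh (d · artanh (tanh β · m))`. At `β_c` one has `tanh β_c = 1 / d`, so this map has slope `1`
at the fixed point `0`, and on `[0, 1]` it lies between `m / (1 + m²)` and
`m / (1 + (d - 1) / d² · m²)`. The quantity `1 / m²` therefore increases by an amount bounded away
from `0` and `∞` at each step, which gives `m ≍ n ^ (-1/2)`.
-/

section OneSpin

/-- The mean of a spin distributed according to the unnormalized weight `w`. -/
noncomputable def spinMean (w : Bool → ℝ) : ℝ := (∑ b, spin b * w b) / ∑ b, w b

/-- The weight induced on a vertex by summing out one neighbour of weight `w`. -/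
noncomputable def edgeTransfer (β : ℝ) (w : Bool → ℝ) (s : Bool) : ℝ :=
  ∑ t, Real.exp (β * (spin t * spin s)) * w t

/-- `tanh (k * artanh x)`, by iterating the addition formula of `tanh`. Unlike that expression it
keeps its meaning at `x = 1`. -/
noncomputable def tanhNsmul : ℕ → ℝ → ℝ
  | 0, _ => 0
  | k + 1, x => (tanhNsmul k x + x) / (1 + tanhNsmul k x * x)

theorem spinMean_eq_div (w : Bool → ℝ) :
    spinMean w = (w true - w false) / (w true + w false) := by
  simp [spinMean, spin, sub_eq_add_neg]

theorem spinMean_single_true : spinMean (Pi.single true 1) = 1 := by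
  simp [spinMean_eq_div]

theorem spinMean_mul {v w : Bool → ℝ} (hv : ∑ b, v b ≠ 0) (hw : ∑ b, w b ≠ 0) :
    spinMean (v * w) = (spinMean v + spinMean w) / (1 + spinMean v * spinMean w) := by
  rw [Fintype.sum_bool] at hv hw
  have hnum : spinMean v + spinMean w =
      2 * (v true * w true - v false * w false) /
        ((v true + v false) * (w true + w false)) := by
    rw [spinMean_eq_div, spinMean_eq_div, div_add_div _ _ hv hw]
    ring
  have hden : 1 + spinMean v * spinMean w =
      2 * (v true * w true + v false * w false) /
        ((v true + v false) * (w true + w false)) := by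
    rw [spinMean_eq_div, spinMean_eq_div, div_mul_div_comm, one_add_div (mul_ne_zero hv hw)]
    ring
  rw [hnum, hden, div_div_div_cancel_right₀ (mul_ne_zero hv hw),
    mul_div_mul_left _ _ two_ne_zero, spinMean_eq_div]
  rfl

theorem spinMean_pow {w : Bool → ℝ} (hw : ∀ b, 0 < w b) (k : ℕ) :
    spinMean (w ^ k) = tanhNsmul k (spinMean w) := by
  have sum_ne_zero {v : Bool → ℝ} (hv : ∀ b, 0 < v b) : ∑ b, v b ≠ 0 :=
    (Finset.sum_pos (fun b _ => hv b) Finset.univ_nonempty).ne'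
  induction k with
  | zero => simp [spinMean_eq_div, tanhNsmul]
  | succ k ih =>
    have hpow : ∀ b, 0 < (w ^ k) b := fun b => pow_pos (hw b) k
    rw [pow_succ, spinMean_mul (sum_ne_zero hpow) (sum_ne_zero hw), ih, tanhNsmul]

theorem edgeTransfer_pos (β : ℝ) {w : Bool → ℝ} (hw : 0 < w) (s : Bool) :
    0 < edgeTransfer β w s := by
  obtain ⟨hw_nonneg, b, hb⟩ := Pi.lt_def.1 hw
  exact Finset.sum_pos' (fun t _ => mul_nonneg (Real.exp_nonneg _) (hw_nonneg t))
    ⟨b, Finset.mem_univ b, mul_pos (Real.exp_pos _) hb⟩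

theorem edgeTransfer_single_true (β : ℝ) (s : Bool) :
    edgeTransfer β (Pi.single true 1) s = Real.exp (β * spin s) := by
  simp [edgeTransfer, spin]

theorem spinMean_edgeTransfer (β : ℝ) (w : Bool → ℝ) :
    spinMean (edgeTransfer β w) = Real.tanh β * spinMean w := by
  have htrue : edgeTransfer β w true = Real.exp β * w true + Real.exp (-β) * w false := by
    simp [edgeTransfer, spin]
  have hfalse : edgeTransfer β w false = Real.exp (-β) * w true + Real.exp β * w false := by
    simp [edgeTransfer, spin]
  rw [spinMean_eq_div, spinMean_eq_div, htrue, hfalse, Real.tanh_eq, div_mul_div_comm]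
  congr 1 <;> ring

theorem spinMean_iterate_edgeTransfer_pow (d : ℕ) (β : ℝ) {w : Bool → ℝ} (hw : 0 < w) (n : ℕ) :
    spinMean ((fun v => edgeTransfer β v ^ d)^[n] w) =
      (fun m => tanhNsmul d (Real.tanh β * m))^[n] (spinMean w) := by
  induction n generalizing w with
  | zero => rfl
  | succ n ih =>
    have hpos : ∀ s, 0 < (edgeTransfer β w ^ d) s := fun s => pow_pos (edgeTransfer_pos β hw s) d
    have hpos' : 0 < edgeTransfer β w ^ d :=
      Pi.lt_def.2 ⟨fun s => (hpos s).le, true, hpos true⟩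
    rw [Function.iterate_succ_apply, Function.iterate_succ_apply, ih hpos',
      spinMean_pow (edgeTransfer_pos β hw), spinMean_edgeTransfer]

end OneSpin

section TreeRecursion

variable {d n : ℕ}

/-- The sum of `σ_x σ_y` over the edges `{x, y}` of `L_n`. -/
noncomputable def edgeSum (d n : ℕ) (σ : Config d n) : ℝ :=
  ∑ k : Fin n, ∑ f : Fin ((k : ℕ) + 1) → Fin d,
    spin (σ ⟨k.succ, f⟩) * spin (σ ⟨k.castSucc, Fin.init f⟩)

/-- The unnormalized Gibbs weight on `V_n` in which every vertex of `W_n` carries the additional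
one-spin weight `w`, representing whatever is attached to the tree below that vertex. -/
noncomputable def treeWeight (d n : ℕ) (β : ℝ) (w : Bool → ℝ) (σ : Config d n) : ℝ :=
  Real.exp (β * edgeSum d n σ) * ∏ f : Fin n → Fin d, w (σ ⟨Fin.last n, f⟩)

/-- A configuration on `V_{n+1}` split into its restriction to `V_n` and the spins of `W_{n+1}`. -/
def configSuccEquiv (d n : ℕ) :
    Config d (n + 1) ≃ Config d n × ((Fin (n + 1) → Fin d) → Bool) where
  toFun σ := (fun v => σ ⟨v.1.castSucc, v.2⟩, fun f => σ ⟨Fin.last (n + 1), f⟩)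
  invFun p := fun v =>
    Fin.lastCases (motive := fun k : Fin (n + 2) => (Fin (k : ℕ) → Fin d) → Bool)
      p.2 (fun k f => p.1 ⟨k, f⟩) v.1 v.2
  left_inv σ := by
    funext ⟨k, f⟩
    induction k using Fin.lastCases with
    | last => simp
    | cast k => simp
  right_inv p := by
    refine Prod.ext (funext fun v => ?_) (funext fun f => ?_)
    · simp only [Fin.lastCases_castSucc]
      rfl
    · simp only [Fin.lastCases_last]

theorem prod_comp_fin_init {α M : Type*} [Fintype α] [CommMonoid M] (n : ℕ)
    (g : (Fin n → α) → M) :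
    ∏ f : Fin (n + 1) → α, g (Fin.init f) = ∏ f, g f ^ Fintype.card α := by
  rw [← (Fin.snocEquiv fun _ => α).prod_comp, Fintype.prod_prod_type_right]
  simp [Fin.snocEquiv]

theorem edgeSum_succ (σ : Config d (n + 1)) :
    edgeSum d (n + 1) σ = edgeSum d n (configSuccEquiv d n σ).1 +
      ∑ f, spin ((configSuccEquiv d n σ).2 f) *
        spin ((configSuccEquiv d n σ).1 ⟨Fin.last n, Fin.init f⟩) :=
  Fin.sum_univ_castSucc _

theorem treeWeight_succ (β : ℝ) (w : Bool → ℝ) (σ : Config d (n + 1)) :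
    treeWeight d (n + 1) β w σ =
      Real.exp (β * edgeSum d n (configSuccEquiv d n σ).1) *
        ∏ f, Real.exp (β * (spin ((configSuccEquiv d n σ).2 f) *
          spin ((configSuccEquiv d n σ).1 ⟨Fin.last n, Fin.init f⟩))) *
            w ((configSuccEquiv d n σ).2 f) := by
  rw [treeWeight, edgeSum_succ, mul_add, Real.exp_add, Finset.prod_mul_distrib, ← Real.exp_sum,
    ← Finset.mul_sum, mul_assoc]
  rfl

theorem sum_treeWeight_configSuccEquiv_symm (β : ℝ) (w : Bool → ℝ) (σ : Config d n) :
    ∑ τ, treeWeight d (n + 1) β w ((configSuccEquiv d n).symm (σ, τ)) =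
      treeWeight d n β (edgeTransfer β w ^ d) σ := by
  simp only [treeWeight_succ, Equiv.apply_symm_apply, ← Finset.mul_sum]
  rw [← Fintype.prod_sum fun (f : Fin (n + 1) → Fin d) t =>
    Real.exp (β * (spin t * spin (σ ⟨Fin.last n, Fin.init f⟩))) * w t]
  have h := prod_comp_fin_init n fun f : Fin n → Fin d => edgeTransfer β w (σ ⟨Fin.last n, f⟩)
  rw [Fintype.card_fin] at h
  exact congrArg _ h

theorem configSuccEquiv_symm_treeRoot (σ : Config d n) (τ : (Fin (n + 1) → Fin d) → Bool) :
    (configSuccEquiv d n).symm (σ, τ) (treeRoot d (n + 1)) = σ (treeRoot d n) :=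
  congrFun (congrArg Prod.fst ((configSuccEquiv d n).apply_symm_apply (σ, τ))) (treeRoot d n)

theorem sum_root_mul_treeWeight_succ (β : ℝ) (w φ : Bool → ℝ) :
    ∑ σ, φ (σ (treeRoot d (n + 1))) * treeWeight d (n + 1) β w σ =
      ∑ σ, φ (σ (treeRoot d n)) * treeWeight d n β (edgeTransfer β w ^ d) σ := by
  rw [← (configSuccEquiv d n).symm.sum_comp, Fintype.sum_prod_type]
  simp only [configSuccEquiv_symm_treeRoot, ← Finset.mul_sum, sum_treeWeight_configSuccEquiv_symm]

theorem eq_treeRoot_of_height_zero (v : TreeVtx d 0) : v = treeRoot d 0 := by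
  obtain ⟨k, f⟩ := v
  obtain rfl : k = 0 := Fin.fin_one_eq_zero k
  exact congrArg (Sigma.mk 0) (funext fun i => i.elim0)

theorem treeWeight_zero (β : ℝ) (w : Bool → ℝ) (σ : Config d 0) :
    treeWeight d 0 β w σ = w (σ (treeRoot d 0)) := by
  rw [treeWeight, edgeSum, Fin.sum_univ_zero, mul_zero, Real.exp_zero, one_mul,
    Fintype.prod_unique]
  exact congrArg (w ∘ σ) (eq_treeRoot_of_height_zero _)

theorem sum_root_mul_treeWeight_zero (β : ℝ) (w φ : Bool → ℝ) :
    ∑ σ, φ (σ (treeRoot d 0)) * treeWeight d 0 β w σ = ∑ b, φ b * w b := by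
  let : Unique (TreeVtx d 0) := ⟨⟨treeRoot d 0⟩, eq_treeRoot_of_height_zero⟩
  let e : Config d 0 ≃ Bool := Equiv.funUnique (TreeVtx d 0) Bool
  simp only [treeWeight_zero]
  exact e.sum_comp fun b => φ b * w b

theorem sum_root_mul_treeWeight (n : ℕ) (β : ℝ) (w φ : Bool → ℝ) :
    ∑ σ, φ (σ (treeRoot d n)) * treeWeight d n β w σ =
      ∑ b, φ b * (fun v => edgeTransfer β v ^ d)^[n] w b := by
  induction n generalizing w with
  | zero => exact sum_root_mul_treeWeight_zero β w φ
  | succ n ih => rw [sum_root_mul_treeWeight_succ, ih, Function.iterate_succ_apply]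

theorem hamiltonianPlus_eq_neg_edgeSum_sub (σ : Config d n) :
    hamiltonianPlus d n σ =
      -edgeSum d n σ - ∑ f : Fin n → Fin d, (d : ℝ) * spin (σ ⟨Fin.last n, f⟩) :=
  rfl

/-- The `d` children of a vertex of `W_n` are frozen to `+1`, i.e. they carry the weight
`Pi.single true 1`. -/
theorem exp_neg_mul_hamiltonianPlus (β : ℝ) (σ : Config d n) :
    Real.exp (-β * hamiltonianPlus d n σ) =
      treeWeight d n β (edgeTransfer β (Pi.single true 1) ^ d) σ := by
  simp only [treeWeight, Pi.pow_apply, edgeTransfer_single_true, ← Real.exp_nat_mul]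
  rw [← Real.exp_sum, ← Real.exp_add, hamiltonianPlus_eq_neg_edgeSum_sub, ← Finset.mul_sum,
    ← Finset.mul_sum, ← Finset.mul_sum]
  congr 1
  ring

theorem rootMagnetization_eq_iterate (d n : ℕ) (β : ℝ) :
    rootMagnetization d n β = (fun m => tanhNsmul d (Real.tanh β * m))^[n + 1] 1 := by
  have hnum := sum_root_mul_treeWeight (d := d) n β (edgeTransfer β (Pi.single true 1) ^ d) spin
  have hden := sum_root_mul_treeWeight (d := d) n β (edgeTransfer β (Pi.single true 1) ^ d) 1
  simp only [Pi.one_apply, one_mul] at hden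
  have hpos : (0 : Bool → ℝ) < Pi.single true 1 := Pi.single_pos.2 one_pos
  rw [← spinMean_single_true, ← spinMean_iterate_edgeTransfer_pow d β hpos (n + 1),
    Function.iterate_succ_apply]
  simp only [rootMagnetization, exp_neg_mul_hamiltonianPlus, hnum, hden, spinMean]

end TreeRecursion

section TanhNsmul

variable {x : ℝ}

theorem tanhNsmul_nonneg (k : ℕ) (hx : 0 ≤ x) : 0 ≤ tanhNsmul k x := by
  induction k with
  | zero => simp [tanhNsmul]
  | succ k ih =>
    rw [tanhNsmul]
    positivity

theorem tanhNsmul_le_mul (k : ℕ) (hx : 0 ≤ x) : tanhNsmul k x ≤ k * x := by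
  induction k with
  | zero => simp [tanhNsmul]
  | succ k ih =>
    have ht := tanhNsmul_nonneg k hx
    calc tanhNsmul (k + 1) x ≤ tanhNsmul k x + x :=
          div_le_self (by positivity) (le_add_of_nonneg_right (by positivity))
      _ ≤ k * x + x := by gcongr
      _ = (k + 1 : ℕ) * x := by push_cast; ring

theorem tanhNsmul_mul_le (k : ℕ) (hx₀ : 0 ≤ x) (hx₁ : x ≤ 1) :
    tanhNsmul k x * (1 + ((k : ℝ) - 1) * x ^ 2) ≤ k * x := by
  cases k with
  | zero => simp [tanhNsmul]
  | succ k =>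
    have ht := tanhNsmul_nonneg k hx₀
    have hgap : 0 ≤ (1 - x ^ 2) * (k * x - tanhNsmul k x) :=
      mul_nonneg (sub_nonneg.2 (pow_le_one₀ hx₀ hx₁)) (sub_nonneg.2 (tanhNsmul_le_mul k hx₀))
    rw [tanhNsmul, div_mul_eq_mul_div, div_le_iff₀ (by positivity)]
    push_cast
    linarith

theorem mul_le_tanhNsmul_mul (k : ℕ) (hx : 0 ≤ x) :
    k * x ≤ tanhNsmul k x * (1 + (k * x) ^ 2) := by
  induction k with
  | zero => simp [tanhNsmul]
  | succ k ih =>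
    have ht := tanhNsmul_nonneg k hx
    have h₁ : 0 ≤ tanhNsmul k x * (k * x ^ 2) := by positivity
    have h₂ : 0 ≤ x * ((k + 1) * x) ^ 2 := by positivity
    rw [tanhNsmul, div_mul_eq_mul_div, le_div_iff₀ (by positivity)]
    push_cast
    linarith

end TanhNsmul

section InverseSquareGrowth

variable {𝕜 : Type*} [Field 𝕜] [LinearOrder 𝕜] [IsStrictOrderedRing 𝕜] {u : ℕ → 𝕜} {a : 𝕜}

theorem inv_sq_zero_add_mul_le_inv_sq (ha : 0 ≤ a) (hu : ∀ n, 0 < u n)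
    (hstep : ∀ n, u (n + 1) * (1 + a * u n ^ 2) ≤ u n) (n : ℕ) :
    (u 0 ^ 2)⁻¹ + 2 * a * n ≤ (u n ^ 2)⁻¹ := by
  induction n with
  | zero => simp
  | succ n ih =>
    have hn := hu n
    have hinv : (1 + a * u n ^ 2) / u n ≤ (u (n + 1))⁻¹ := by
      rw [le_inv_comm₀ (by positivity) (hu _), inv_div, le_div_iff₀ (by positivity)]
      exact hstep n
    calc (u 0 ^ 2)⁻¹ + 2 * a * (n + 1 : ℕ) = (u 0 ^ 2)⁻¹ + 2 * a * n + 2 * a := by push_cast; ring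
      _ ≤ (u n ^ 2)⁻¹ + 2 * a + (a * u n) ^ 2 := by linarith [sq_nonneg (a * u n)]
      _ = ((1 + a * u n ^ 2) / u n) ^ 2 := by field_simp; ring
      _ ≤ (u (n + 1))⁻¹ ^ 2 := by gcongr
      _ = (u (n + 1) ^ 2)⁻¹ := inv_pow _ _

theorem inv_sq_le_inv_sq_zero_add_mul {M : 𝕜} (ha : 0 ≤ a) (hu : ∀ n, 0 < u n)
    (huM : ∀ n, u n ≤ M) (hstep : ∀ n, u n ≤ u (n + 1) * (1 + a * u n ^ 2)) (n : ℕ) :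
    (u n ^ 2)⁻¹ ≤ (u 0 ^ 2)⁻¹ + (2 * a + (a * M) ^ 2) * n := by
  induction n with
  | zero => simp
  | succ n ih =>
    have hn := hu n
    have hn' := hu (n + 1)
    have hinv : (u (n + 1))⁻¹ ≤ (1 + a * u n ^ 2) / u n := by
      rw [inv_le_comm₀ hn' (by positivity), inv_div, div_le_iff₀ (by positivity)]
      exact hstep n
    calc (u (n + 1) ^ 2)⁻¹ = (u (n + 1))⁻¹ ^ 2 := (inv_pow _ _).symm
      _ ≤ ((1 + a * u n ^ 2) / u n) ^ 2 := by gcongr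
      _ = (u n ^ 2)⁻¹ + 2 * a + (a * u n) ^ 2 := by field_simp; ring
      _ ≤ (u 0 ^ 2)⁻¹ + (2 * a + (a * M) ^ 2) * n + 2 * a + (a * M) ^ 2 := by
        gcongr
        exact huM n
      _ = (u 0 ^ 2)⁻¹ + (2 * a + (a * M) ^ 2) * (n + 1 : ℕ) := by push_cast; ring

end InverseSquareGrowth

section RpowNegHalf

variable {A x m : ℝ}

theorem inv_sqrt_mul_rpow_neg_half (hA : 0 ≤ A) (hx : 0 ≤ x) :
    (√A)⁻¹ * x ^ (-(1 / 2 : ℝ)) = √(A * x)⁻¹ := by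
  rw [Real.rpow_neg hx, ← Real.sqrt_eq_rpow, ← mul_inv, ← Real.sqrt_mul hA, Real.sqrt_inv]

theorem inv_sqrt_mul_rpow_neg_half_lt_iff (hA : 0 < A) (hx : 0 < x) (hm : 0 < m) :
    (√A)⁻¹ * x ^ (-(1 / 2 : ℝ)) < m ↔ (m ^ 2)⁻¹ < A * x := by
  rw [inv_sqrt_mul_rpow_neg_half hA.le hx.le, Real.sqrt_lt' hm,
    inv_lt_comm₀ (by positivity) (by positivity)]

theorem lt_inv_sqrt_mul_rpow_neg_half_iff (hA : 0 < A) (hx : 0 < x) (hm : 0 < m) :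
    m < (√A)⁻¹ * x ^ (-(1 / 2 : ℝ)) ↔ A * x < (m ^ 2)⁻¹ := by
  rw [inv_sqrt_mul_rpow_neg_half hA.le hx.le, Real.lt_sqrt hm.le,
    lt_inv_comm₀ (by positivity) (by positivity)]

end RpowNegHalf

section Critical

variable {d : ℕ}

theorem tanh_betaCrit (hd : 2 ≤ d) : Real.tanh (betaCrit d) = (d : ℝ)⁻¹ := by
  have hd' : (2 : ℝ) ≤ d := by exact_mod_cast hd
  have hd_pos : (0 : ℝ) < (d : ℝ)⁻¹ := by positivity
  have hd_lt : (d : ℝ)⁻¹ < 1 := inv_lt_one_of_one_lt₀ (by linarith)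
  have hartanh : betaCrit d = Real.artanh (d : ℝ)⁻¹ := by
    rw [Real.artanh_eq_half_log ⟨by linarith, hd_lt.le⟩, betaCrit]
    congr 2
    field_simp
  rw [hartanh, Real.tanh_artanh ⟨by linarith, hd_lt⟩]

/-- The map `m ↦ tanh (d * artanh (m / d))`, one step of the recursion at `β_c`. -/
noncomputable def critMap (d : ℕ) (m : ℝ) : ℝ := tanhNsmul d ((d : ℝ)⁻¹ * m)

theorem rootMagnetization_betaCrit (hd : 2 ≤ d) (n : ℕ) :
    rootMagnetization d n (betaCrit d) = (critMap d)^[n + 1] 1 := by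
  rw [rootMagnetization_eq_iterate, tanh_betaCrit hd]
  rfl

theorem critMap_mul_le (hd : 1 ≤ d) {m : ℝ} (hm₀ : 0 ≤ m) (hm₁ : m ≤ d) :
    critMap d m * (1 + ((d : ℝ) - 1) / d ^ 2 * m ^ 2) ≤ m := by
  have h := tanhNsmul_mul_le d (x := (d : ℝ)⁻¹ * m) (by positivity)
    (inv_mul_le_one_of_le₀ hm₁ (by positivity))
  rwa [mul_inv_cancel_left₀ (by positivity), mul_pow, inv_pow, ← mul_assoc,
    ← div_eq_mul_inv] at h

theorem le_critMap_mul (hd : 1 ≤ d) {m : ℝ} (hm : 0 ≤ m) :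
    m ≤ critMap d m * (1 + m ^ 2) := by
  have h := mul_le_tanhNsmul_mul d (x := (d : ℝ)⁻¹ * m) (by positivity)
  rwa [mul_inv_cancel_left₀ (by positivity)] at h

theorem mapsTo_critMap_Ioc (hd : 1 ≤ d) :
    Set.MapsTo (critMap d) (Set.Ioc 0 1) (Set.Ioc 0 1) := by
  intro m hm
  have hd' : (1 : ℝ) ≤ d := by exact_mod_cast hd
  have hpos : 0 < critMap d m :=
    pos_of_mul_pos_left (hm.1.trans_le (le_critMap_mul hd hm.1.le)) (by positivity)
  have hgain : 0 ≤ ((d : ℝ) - 1) / d ^ 2 * m ^ 2 :=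
    mul_nonneg (div_nonneg (sub_nonneg.2 hd') (sq_nonneg _)) (sq_nonneg _)
  refine ⟨hpos, ?_⟩
  calc critMap d m ≤ critMap d m * (1 + ((d : ℝ) - 1) / d ^ 2 * m ^ 2) :=
        le_mul_of_one_le_right hpos.le (le_add_of_nonneg_right hgain)
    _ ≤ m := critMap_mul_le hd hm.1.le (hm.2.trans hd')
    _ ≤ 1 := hm.2

theorem iterate_critMap_mem_Ioc (hd : 1 ≤ d) (n : ℕ) : (critMap d)^[n] 1 ∈ Set.Ioc (0 : ℝ) 1 :=
  (mapsTo_critMap_Ioc hd).iterate n (Set.right_mem_Ioc.2 one_pos)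

theorem one_add_mul_le_inv_sq_iterate_critMap (hd : 1 ≤ d) (n : ℕ) :
    1 + 2 * (((d : ℝ) - 1) / d ^ 2) * n ≤ (((critMap d)^[n] 1) ^ 2)⁻¹ := by
  have hd' : (1 : ℝ) ≤ d := by exact_mod_cast hd
  have hmem := iterate_critMap_mem_Ioc hd
  simpa using inv_sq_zero_add_mul_le_inv_sq (u := fun n => (critMap d)^[n] 1)
    (div_nonneg (sub_nonneg.2 hd') (sq_nonneg _)) (fun k => (hmem k).1)
    (fun k => by
      rw [Function.iterate_succ_apply']
      exact critMap_mul_le hd (hmem k).1.le ((hmem k).2.trans hd')) n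

theorem inv_sq_iterate_critMap_le (hd : 1 ≤ d) (n : ℕ) :
    (((critMap d)^[n] 1) ^ 2)⁻¹ ≤ 1 + 3 * n := by
  have hmem := iterate_critMap_mem_Ioc hd
  have h := inv_sq_le_inv_sq_zero_add_mul (u := fun n => (critMap d)^[n] 1) (a := 1)
    zero_le_one (fun k => (hmem k).1) (fun k => (hmem k).2)
    (fun k => by
      rw [Function.iterate_succ_apply', one_mul]
      exact le_critMap_mul hd (hmem k).1.le) n
  exact h.trans_eq (by norm_num)

end Critical

/-- **The critical 1-arm exponent for the Ising model on the rooted Cayley tree is 1/2**: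
at the critical inverse temperature `β_c = arctanh (1/d)` there are constants
`c, C > 0` with `c·n^{-1/2} < ⟨σ_0⟩_n^+ < C·n^{-1/2}` for all `n ≥ 1`. -/
theorem critical_one_arm_exponent (d : ℕ) (hd : 2 ≤ d) :
    ∃ c C : ℝ, 0 < c ∧ 0 < C ∧ ∀ n : ℕ, 1 ≤ n →
      c * (n : ℝ) ^ (-(1 / 2 : ℝ)) < rootMagnetization d n (betaCrit d) ∧
        rootMagnetization d n (betaCrit d) < C * (n : ℝ) ^ (-(1 / 2 : ℝ)) := by
  set a : ℝ := ((d : ℝ) - 1) / d ^ 2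
  have hd' : (2 : ℝ) ≤ d := by exact_mod_cast hd
  have ha : 0 < a := div_pos (by linarith) (by positivity)
  refine ⟨(√8)⁻¹, (√(2 * a))⁻¹, by positivity, by positivity, fun n hn => ?_⟩
  have hn' : (1 : ℝ) ≤ n := by exact_mod_cast hn
  have hpos : 0 < (critMap d)^[n + 1] 1 := (iterate_critMap_mem_Ioc (by lia) _).1
  have hlower : 1 + 2 * a * (n + 1 : ℕ) ≤ (((critMap d)^[n + 1] 1) ^ 2)⁻¹ :=
    one_add_mul_le_inv_sq_iterate_critMap (by lia) (n + 1)
  have hupper : (((critMap d)^[n + 1] 1) ^ 2)⁻¹ ≤ 1 + 3 * (n + 1 : ℕ) :=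
    inv_sq_iterate_critMap_le (by lia) (n + 1)
  push_cast at hlower hupper
  rw [rootMagnetization_betaCrit hd,
    inv_sqrt_mul_rpow_neg_half_lt_iff (by positivity) (by positivity) hpos,
    lt_inv_sqrt_mul_rpow_neg_half_iff (by positivity) (by positivity) hpos]
  exact ⟨by linarith, by linarith⟩
end

section
/- For every integer d ≥ 2, at the critical inverse temperature β = β_c = arctanh(1/d), the recursively defined ratio satisfies, for all integers n ≥ 1, the two-sided bound 1 − (1 − y_0/x_0)·n^{-1/2} ≥ y_{n−1}/x_{n−1} ≥ 1 − (√6·d/√(d²−1))·n^{-1/2}. -/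
/-!
Write `y_n / x_n = e^{-2 h_n}`. The recursion becomes `h_{n+1} = d * artanh (tanh β * tanh h_n)`,
and `tanh β_c = 1 / d`, so at criticality the linear part of this map is the identity. The second
and third convergents of the continued fraction of `tanh (d * u)` in powers of `tanh u` control its
cubic part: they show that each step increases `coth h_n` by about `(1 - 1 / d ^ 2) / (3 coth h_n)`.
Since `(1 - y_n / x_n)⁻¹ = (coth h_n + 1) / 2`, the square of the left-hand side grows by an amount
between `(1 - 1 / d ^ 2) / 6` and `1` per step.
-/

/-- The pair of recursively defined sequences `(x_n, y_n)`:
`x_0 = (e^{β(d+1)} + e^{−β(d+1)})^d`, `y_0 = (e^{β(d−1)} + e^{−β(d−1)})^d`, and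
`x_n = (e^β x_{n−1} + e^{−β} y_{n−1})^d`, `y_n = (e^β y_{n−1} + e^{−β} x_{n−1})^d`. -/
noncomputable def xy (β : ℝ) (d : ℕ) : ℕ → ℝ × ℝ
  | 0 => ((Real.exp (β * ((d : ℝ) + 1)) + Real.exp (-β * ((d : ℝ) + 1))) ^ d,
          (Real.exp (β * ((d : ℝ) - 1)) + Real.exp (-β * ((d : ℝ) - 1))) ^ d)
  | n + 1 => ((Real.exp β * (xy β d n).1 + Real.exp (-β) * (xy β d n).2) ^ d,
              (Real.exp β * (xy β d n).2 + Real.exp (-β) * (xy β d n).1) ^ d)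

section

open Real

theorem le_of_inv_sq_le_inv_sq {a b : ℝ} (ha : 0 < a) (hb : 0 < b) (h : b⁻¹ ^ 2 ≤ a⁻¹ ^ 2) :
    a ≤ b :=
  (inv_le_inv₀ hb ha).1 ((sq_le_sq₀ (by positivity) (by positivity)).1 h)

theorem one_div_natCast_sq_le_one (k : ℕ) : 1 / (k : ℝ) ^ 2 ≤ 1 := by
  rcases k.eq_zero_or_pos with rfl | hk
  · simp
  · exact (div_le_one (by positivity)).2 (by exact_mod_cast Nat.one_le_pow 2 k hk)

theorem tanh_add (x y : ℝ) : tanh (x + y) = (tanh x + tanh y) / (1 + tanh x * tanh y) := by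
  have hx := (cosh_pos x).ne'
  have hy := (cosh_pos y).ne'
  simp only [tanh_eq_sinh_div_cosh, sinh_add, cosh_add]
  field_simp

theorem tanh_pos {x : ℝ} (hx : 0 < x) : 0 < tanh x := by
  rw [tanh_eq_sinh_div_cosh]
  exact div_pos (sinh_pos_iff.2 hx) (cosh_pos x)

theorem tanh_nonneg {x : ℝ} (hx : 0 ≤ x) : 0 ≤ tanh x := by
  rw [tanh_eq_sinh_div_cosh]
  exact div_nonneg (sinh_nonneg_iff.2 hx) (cosh_pos x).le

theorem add_div_one_add_mul_le {s a b : ℝ} (hs : s ^ 2 ≤ 1) (ha : 0 < 1 + a * s)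
    (hb : 0 < 1 + b * s) (hab : a ≤ b) : (a + s) / (1 + a * s) ≤ (b + s) / (1 + b * s) := by
  rw [div_le_div_iff₀ ha hb]
  linear_combination mul_nonneg (sub_nonneg.2 hab) (sub_nonneg.2 hs)

theorem div_add_div_one_add_div_mul {a b : ℝ} (hb : b ≠ 0) (s : ℝ) :
    (a / b + s) / (1 + a / b * s) = (a + s * b) / (b + a * s) := by
  field_simp

theorem div_le_tanh_nat_mul (k : ℕ) {u : ℝ} (hu : 0 ≤ u) :
    3 * k * tanh u / (3 + ((k : ℝ) ^ 2 - 1) * tanh u ^ 2) ≤ tanh (k * u) := by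
  have hs0 := tanh_nonneg hu
  have hs1 := tanh_sq_lt_one u
  have hden (m : ℝ) : 0 < 3 + (m ^ 2 - 1) * tanh u ^ 2 := by
    nlinarith [mul_nonneg (sq_nonneg m) (sq_nonneg (tanh u))]
  induction k with
  | zero => simp
  | succ k ih =>
    have hT := tanh_nonneg (by positivity : 0 ≤ k * u)
    have hDk := hden k
    have hD := hden (k + 1)
    push_cast
    rw [add_one_mul, tanh_add]
    set s := tanh u
    refine le_trans ?_ (add_div_one_add_mul_le hs1.le (by positivity) (by positivity) ih)
    rw [div_add_div_one_add_div_mul hDk.ne', div_le_div_iff₀ hD (by positivity)]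
    have hk : 0 ≤ (k : ℝ) * (k ^ 2 - 1) := by
      rcases k.eq_zero_or_pos with rfl | hk
      · simp
      · have : (1 : ℝ) ≤ k := by exact_mod_cast hk
        exact mul_nonneg (by positivity) (by nlinarith)
    -- `hrem` is the exact defect of the bounds for `k` and `k + 1` under the addition formula.
    have hrem : 0 ≤ (k : ℝ) * (k ^ 2 - 1) * ((k + 2) * s ^ 5) := mul_nonneg hk (by positivity)
    linear_combination hrem

theorem tanh_nat_mul_le_div (k : ℕ) {u : ℝ} (hu : 0 ≤ u) :
    tanh (k * u) ≤ k * tanh u * (15 + ((k : ℝ) ^ 2 - 4) * tanh u ^ 2) /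
      (15 + (6 * (k : ℝ) ^ 2 - 9) * tanh u ^ 2) := by
  have hs0 := tanh_nonneg hu
  have hs1 := tanh_sq_lt_one u
  have hden (m : ℝ) : 0 < 15 + (6 * m ^ 2 - 9) * tanh u ^ 2 := by
    nlinarith [mul_nonneg (sq_nonneg m) (sq_nonneg (tanh u))]
  induction k with
  | zero => simp
  | succ k ih =>
    have hT := tanh_nonneg (by positivity : 0 ≤ k * u)
    have hDk := hden k
    have hD := hden (k + 1)
    push_cast
    rw [add_one_mul, tanh_add]
    set s := tanh u
    have hNk : 0 < 15 + ((k : ℝ) ^ 2 - 4) * s ^ 2 := by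
      nlinarith [mul_nonneg (sq_nonneg (k : ℝ)) (sq_nonneg s)]
    refine (add_div_one_add_mul_le hs1.le (by positivity) (by positivity) ih).trans ?_
    rw [div_add_div_one_add_div_mul hDk.ne', div_le_div_iff₀ (by positivity) hD]
    have hk : 0 ≤ (k : ℝ) * (k ^ 2 - 1) * (k ^ 2 - 4) := by
      rcases k with _ | _ | k
      · simp
      · simp
      · push_cast
        ring_nf
        positivity
    have hrem : 0 ≤ (k : ℝ) * (k ^ 2 - 1) * (k ^ 2 - 4) * ((k + 3) * s ^ 7) :=
      mul_nonneg hk (by positivity)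
    linear_combination hrem

theorem tanh_eq_one_sub_exp_div (h : ℝ) :
    tanh h = (1 - exp (-(2 * h))) / (1 + exp (-(2 * h))) := by
  have hexp : exp (-(2 * h)) = exp (-h) / exp h := by rw [← exp_sub]; ring_nf
  rw [tanh_eq, hexp]
  field_simp

theorem one_sub_exp_neg_two_mul_pos {h : ℝ} (hh : 0 < h) : 0 < 1 - exp (-(2 * h)) :=
  sub_pos.2 (exp_lt_one_iff.2 (by linarith))

theorem one_le_inv_one_sub_exp {h : ℝ} (hh : 0 < h) : 1 ≤ (1 - exp (-(2 * h)))⁻¹ :=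
  (one_le_inv₀ (one_sub_exp_neg_two_mul_pos hh)).2 (by linarith [exp_pos (-(2 * h))])

theorem inv_one_sub_exp_neg_two_mul {h : ℝ} (hh : h ≠ 0) :
    (1 - exp (-(2 * h)))⁻¹ = ((tanh h)⁻¹ + 1) / 2 := by
  have hne : 1 - exp (-(2 * h)) ≠ 0 := by
    rw [sub_ne_zero, ne_comm, Ne, exp_eq_one_iff]
    simpa using hh
  rw [tanh_eq_one_sub_exp_div]
  field_simp
  ring

/-- The map `h ↦ k * artanh (tanh h / k)`, which sends the effective field `h_n` to `h_{n+1}` when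
`d = k` and `tanh β = 1 / k`. -/
noncomputable def criticalMap (k : ℕ) (h : ℝ) : ℝ :=
  k * artanh (tanh h / k)

section CriticalMap

variable {k : ℕ} {h : ℝ}

theorem tanh_div_natCast_mem_Ioo (hk : k ≠ 0) (hh : 0 < h) : tanh h / k ∈ Set.Ioo 0 1 :=
  have ht := tanh_pos hh
  ⟨by positivity,
    (div_le_self ht.le (by exact_mod_cast Nat.pos_of_ne_zero hk)).trans_lt (tanh_lt_one h)⟩

theorem criticalMap_pos (hk : k ≠ 0) (hh : 0 < h) : 0 < criticalMap k h :=
  mul_pos (by positivity) (artanh_pos (tanh_div_natCast_mem_Ioo hk hh))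

theorem tanh_artanh_tanh_div_natCast (hk : k ≠ 0) (hh : 0 < h) :
    tanh (artanh (tanh h / k)) = tanh h / k :=
  tanh_artanh (Set.Ioo_subset_Ioo_left (by norm_num) (tanh_div_natCast_mem_Ioo hk hh))

theorem inv_tanh_criticalMap_le (hk : k ≠ 0) (hh : 0 < h) :
    (tanh (criticalMap k h))⁻¹ ≤ (tanh h)⁻¹ + (1 - 1 / (k : ℝ) ^ 2) / 3 * tanh h := by
  have ht := tanh_pos hh
  have hu := artanh_nonneg (tanh_div_natCast_mem_Ioo hk hh).1.le
  have hconv : 3 * tanh h / (3 + (1 - 1 / (k : ℝ) ^ 2) * tanh h ^ 2) ≤ tanh (criticalMap k h) := by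
    rw [criticalMap]
    convert div_le_tanh_nat_mul k hu using 1
    rw [tanh_artanh_tanh_div_natCast hk hh]
    field_simp
  have he := sub_nonneg.2 (one_div_natCast_sq_le_one k)
  calc
    _ ≤ (3 * tanh h / (3 + (1 - 1 / (k : ℝ) ^ 2) * tanh h ^ 2))⁻¹ :=
      inv_anti₀ (by positivity) hconv
    _ = _ := by field_simp

theorem le_inv_tanh_criticalMap (hk : k ≠ 0) (hh : 0 < h) :
    (tanh h)⁻¹ + (1 - 1 / (k : ℝ) ^ 2) / 3 * ((tanh h)⁻¹ + 1)⁻¹ ≤ (tanh (criticalMap k h))⁻¹ := by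
  have ht := tanh_pos hh
  have hu := artanh_nonneg (tanh_div_natCast_mem_Ioo hk hh).1.le
  have hconv : tanh (criticalMap k h) ≤ tanh h * (15 + (1 - 4 * (1 / (k : ℝ) ^ 2)) * tanh h ^ 2) /
      (15 + (6 - 9 * (1 / (k : ℝ) ^ 2)) * tanh h ^ 2) := by
    rw [criticalMap]
    convert tanh_nat_mul_le_div k hu using 1
    rw [tanh_artanh_tanh_div_natCast hk hh]
    field_simp
  refine le_trans ?_ (inv_anti₀ (tanh_pos (criticalMap_pos hk hh)) hconv)
  have he1 := one_div_natCast_sq_le_one k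
  have he0 : 0 ≤ 1 / (k : ℝ) ^ 2 := by positivity
  have ht1 := tanh_lt_one h
  generalize 1 / (k : ℝ) ^ 2 = e at *
  generalize tanh h = t at *
  set D := 15 + (1 - 4 * e) * t ^ 2 with hD_def
  have hD : 0 < D := by nlinarith
  calc
    _ = t⁻¹ + (1 - e) * (t / (3 * (1 + t))) := by field_simp
    _ ≤ t⁻¹ + (1 - e) * (5 * t / D) := by
      gcongr t⁻¹ + ?_
      refine mul_le_mul_of_nonneg_left ?_ (sub_nonneg.2 he1)
      rw [div_le_div_iff₀ (by positivity) hD, hD_def]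
      nlinarith [mul_nonneg he0 (pow_nonneg ht.le 3)]
    _ = (t * D / (15 + (6 - 9 * e) * t ^ 2))⁻¹ := by
      have hnum : 15 + (6 - 9 * e) * t ^ 2 = D + 5 * (1 - e) * t ^ 2 := by ring
      rw [inv_div, hnum]
      field_simp

theorem inv_one_sub_exp_sq_add_le_criticalMap (hk : k ≠ 0) (hh : 0 < h) :
    (1 - exp (-(2 * h)))⁻¹ ^ 2 + (1 - 1 / (k : ℝ) ^ 2) / 6 ≤
      (1 - exp (-(2 * criticalMap k h)))⁻¹ ^ 2 := by
  have hstep := le_inv_tanh_criticalMap hk hh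
  rw [inv_one_sub_exp_neg_two_mul hh.ne',
    inv_one_sub_exp_neg_two_mul (criticalMap_pos hk hh).ne']
  have he := sub_nonneg.2 (one_div_natCast_sq_le_one k)
  have hw := inv_pos.2 (tanh_pos hh)
  set c := 1 - 1 / (k : ℝ) ^ 2
  set w := (tanh h)⁻¹
  calc
    _ ≤ ((w + c / 3 * (w + 1)⁻¹ + 1) / 2) ^ 2 := by
      have hcross : c / 3 * (w + 1)⁻¹ * (w + 1) = c / 3 := inv_mul_cancel_right₀ (by positivity) _
      nlinarith [sq_nonneg (c / 3 * (w + 1)⁻¹)]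
    _ ≤ _ := by gcongr

theorem inv_one_sub_exp_criticalMap_sq_le_add_one (hk : k ≠ 0) (hh : 0 < h) :
    (1 - exp (-(2 * criticalMap k h)))⁻¹ ^ 2 ≤ (1 - exp (-(2 * h)))⁻¹ ^ 2 + 1 := by
  have hstep := inv_tanh_criticalMap_le hk hh
  rw [inv_one_sub_exp_neg_two_mul hh.ne',
    inv_one_sub_exp_neg_two_mul (criticalMap_pos hk hh).ne']
  have ht := tanh_pos hh
  have ht1 := tanh_lt_one h
  have hw' := inv_pos.2 (tanh_pos (criticalMap_pos hk hh))
  have hstep' : (tanh (criticalMap k h))⁻¹ ≤ (tanh h)⁻¹ + tanh h / 3 := by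
    nlinarith [(by positivity : 0 ≤ 1 / (k : ℝ) ^ 2 * tanh h)]
  calc
    _ ≤ (((tanh h)⁻¹ + tanh h / 3 + 1) / 2) ^ 2 := by gcongr
    _ ≤ _ := by
      have hcross : (tanh h)⁻¹ * tanh h = 1 := inv_mul_cancel₀ ht.ne'
      nlinarith

end CriticalMap

/-- The effective field `h_n` of the recursion, defined by `y_n / x_n = e^{-2 h_n}`. -/
noncomputable def effectiveField (β : ℝ) (d n : ℕ) : ℝ :=
  log ((xy β d n).1 / (xy β d n).2) / 2

theorem xy_pos (β : ℝ) (d n : ℕ) : 0 < (xy β d n).1 ∧ 0 < (xy β d n).2 := by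
  induction n with
  | zero => constructor <;> simp only [xy] <;> positivity
  | succ n ih =>
    obtain ⟨hx, hy⟩ := ih
    constructor <;> simp only [xy] <;> positivity

theorem exp_neg_two_mul_effectiveField (β : ℝ) (d n : ℕ) :
    exp (-(2 * effectiveField β d n)) = (xy β d n).2 / (xy β d n).1 := by
  obtain ⟨hx, hy⟩ := xy_pos β d n
  rw [effectiveField, mul_div_cancel₀ _ two_ne_zero, ← log_inv, inv_div, exp_log (by positivity)]

theorem tanh_effectiveField (β : ℝ) (d n : ℕ) :
    tanh (effectiveField β d n) =
      ((xy β d n).1 - (xy β d n).2) / ((xy β d n).1 + (xy β d n).2) := by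
  obtain ⟨hx, hy⟩ := xy_pos β d n
  rw [tanh_eq_one_sub_exp_div, exp_neg_two_mul_effectiveField]
  field_simp

theorem effectiveField_succ (β : ℝ) (d n : ℕ) :
    effectiveField β d (n + 1) = d * artanh (tanh β * tanh (effectiveField β d n)) := by
  obtain ⟨hx, hy⟩ := xy_pos β d n
  have hz : |tanh β * tanh (effectiveField β d n)| ≤ 1 := by
    rw [abs_mul]
    exact mul_le_one₀ (abs_tanh_lt_one _).le (abs_nonneg _) (abs_tanh_lt_one _).le
  rw [artanh_eq_half_log (abs_le.1 hz), tanh_effectiveField, tanh_eq, effectiveField]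
  simp only [xy]
  rw [← div_pow, log_pow, one_div_mul_eq_div, mul_div_assoc]
  congr 3
  generalize (xy β d n).1 = x at *
  generalize (xy β d n).2 = y at *
  have hp := exp_pos β
  have hq := exp_pos (-β)
  generalize exp β = p at *
  generalize exp (-β) = q at *
  have hne : (p + q) * (x + y) - (p - q) * (x - y) ≠ 0 := by
    have : 0 < p * y + q * x := by positivity
    linarith
  field_simp
  ring

theorem effectiveField_zero_pos {β : ℝ} (hβ : 0 < β) {d : ℕ} (hd : d ≠ 0) :
    0 < effectiveField β d 0 := by
  have hy := (xy_pos β d 0).2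
  have hd1 : (1 : ℝ) ≤ d := by exact_mod_cast Nat.pos_of_ne_zero hd
  refine half_pos (log_pos ((one_lt_div hy).2 (pow_lt_pow_left₀ ?_ (by positivity) hd)))
  have hcosh : cosh (β * ((d : ℝ) - 1)) < cosh (β * ((d : ℝ) + 1)) := by
    rw [cosh_lt_cosh, abs_of_nonneg (mul_nonneg hβ.le (sub_nonneg.2 hd1)),
      abs_of_pos (by positivity)]
    gcongr
    linarith
  rw [cosh_eq, cosh_eq] at hcosh
  simp only [neg_mul]
  linarith

theorem effectiveField_pos {β : ℝ} (hβ : 0 < β) {d : ℕ} (hd : d ≠ 0) (n : ℕ) :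
    0 < effectiveField β d n := by
  induction n with
  | zero => exact effectiveField_zero_pos hβ hd
  | succ n ih =>
    rw [effectiveField_succ]
    have hz : tanh β * tanh (effectiveField β d n) < 1 :=
      mul_lt_one_of_nonneg_of_lt_one_left (tanh_pos hβ).le (tanh_lt_one _) (tanh_lt_one _).le
    exact mul_pos (by positivity) (artanh_pos ⟨mul_pos (tanh_pos hβ) (tanh_pos ih), hz⟩)

theorem betaCrit_eq_artanh {d : ℕ} (hd : d ≠ 0) : betaCrit d = artanh (1 / d) := by
  have hd1 : (1 : ℝ) ≤ d := by exact_mod_cast Nat.pos_of_ne_zero hd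
  have hmem : 1 / (d : ℝ) ∈ Set.Icc (-1) 1 :=
    ⟨by linarith [(by positivity : 0 ≤ 1 / (d : ℝ))], by rwa [div_le_one (by positivity)]⟩
  rw [artanh_eq_half_log hmem, betaCrit]
  congr 2
  field_simp

theorem betaCrit_pos {d : ℕ} (hd : 2 ≤ d) : 0 < betaCrit d := by
  have hd2 : (2 : ℝ) ≤ d := by exact_mod_cast hd
  rw [betaCrit_eq_artanh (by lia)]
  exact artanh_pos ⟨by positivity, by rw [div_lt_one (by positivity)]; linarith⟩

theorem tanh_betaCrit_s3 {d : ℕ} (hd : 2 ≤ d) : tanh (betaCrit d) = 1 / d := by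
  have hd2 : (2 : ℝ) ≤ d := by exact_mod_cast hd
  rw [betaCrit_eq_artanh (by lia)]
  refine tanh_artanh ⟨?_, by rw [div_lt_one (by positivity)]; linarith⟩
  linarith [(by positivity : 0 ≤ 1 / (d : ℝ))]

variable {d : ℕ}

theorem effectiveField_betaCrit_pos (hd : 2 ≤ d) (n : ℕ) : 0 < effectiveField (betaCrit d) d n :=
  effectiveField_pos (betaCrit_pos hd) (by lia) n

theorem effectiveField_betaCrit_succ (hd : 2 ≤ d) (n : ℕ) :
    effectiveField (betaCrit d) d (n + 1) = criticalMap d (effectiveField (betaCrit d) d n) := by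
  rw [effectiveField_succ, tanh_betaCrit_s3 hd, one_div_mul_eq_div, criticalMap]

theorem add_one_mul_le_inv_one_sub_exp_sq (hd : 2 ≤ d) (n : ℕ) :
    ((n : ℝ) + 1) * ((1 - 1 / (d : ℝ) ^ 2) / 6) ≤
      (1 - exp (-(2 * effectiveField (betaCrit d) d n)))⁻¹ ^ 2 := by
  induction n with
  | zero =>
    have h0 := one_le_inv_one_sub_exp (effectiveField_betaCrit_pos hd 0)
    have he : 0 ≤ 1 / (d : ℝ) ^ 2 := by positivity
    push_cast
    linarith [one_le_pow₀ h0 (n := 2)]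
  | succ n ih =>
    have hstep :=
      inv_one_sub_exp_sq_add_le_criticalMap (by lia : d ≠ 0) (effectiveField_betaCrit_pos hd n)
    rw [effectiveField_betaCrit_succ hd]
    push_cast
    linarith

theorem inv_one_sub_exp_sq_le_add_one_mul (hd : 2 ≤ d) (n : ℕ) :
    (1 - exp (-(2 * effectiveField (betaCrit d) d n)))⁻¹ ^ 2 ≤
      ((n : ℝ) + 1) * (1 - exp (-(2 * effectiveField (betaCrit d) d 0)))⁻¹ ^ 2 := by
  induction n with
  | zero => simp
  | succ n ih =>
    have h0 := one_le_inv_one_sub_exp (effectiveField_betaCrit_pos hd 0)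
    have hstep :=
      inv_one_sub_exp_criticalMap_sq_le_add_one (by lia : d ≠ 0) (effectiveField_betaCrit_pos hd n)
    rw [effectiveField_betaCrit_succ hd]
    push_cast
    linarith [one_le_pow₀ h0 (n := 2)]

theorem one_sub_ratio_zero_div_sqrt_le (hd : 2 ≤ d) (n : ℕ) :
    (1 - (xy (betaCrit d) d 0).2 / (xy (betaCrit d) d 0).1) / √(n + 1) ≤
      1 - (xy (betaCrit d) d n).2 / (xy (betaCrit d) d n).1 := by
  simp only [← exp_neg_two_mul_effectiveField]
  have h0 := one_sub_exp_neg_two_mul_pos (effectiveField_betaCrit_pos hd 0)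
  have hn := one_sub_exp_neg_two_mul_pos (effectiveField_betaCrit_pos hd n)
  have h := inv_one_sub_exp_sq_le_add_one_mul hd n
  refine le_of_inv_sq_le_inv_sq (by positivity) hn (h.trans_eq ?_)
  rw [inv_div, div_pow, sq_sqrt (by positivity)]
  field_simp

theorem one_sub_ratio_le_div_sqrt (hd : 2 ≤ d) (n : ℕ) :
    1 - (xy (betaCrit d) d n).2 / (xy (betaCrit d) d n).1 ≤
      √6 * d / √((d : ℝ) ^ 2 - 1) / √(n + 1) := by
  have hd2 : (2 : ℝ) ≤ d := by exact_mod_cast hd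
  have hS : 0 < (d : ℝ) ^ 2 - 1 := by nlinarith
  have hconst : (√6 * d / √((d : ℝ) ^ 2 - 1) / √(n + 1))⁻¹ ^ 2 =
      ((n : ℝ) + 1) * ((1 - 1 / (d : ℝ) ^ 2) / 6) := by
    simp only [inv_pow, div_pow, mul_pow]
    rw [sq_sqrt (by positivity), sq_sqrt hS.le, sq_sqrt (by positivity)]
    field_simp
  rw [← exp_neg_two_mul_effectiveField]
  exact le_of_inv_sq_le_inv_sq
    (one_sub_exp_neg_two_mul_pos (effectiveField_betaCrit_pos hd n)) (by positivity)
    (hconst.trans_le (add_one_mul_le_inv_one_sub_exp_sq hd n))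

end

/-- **Main Lemma**: at the critical inverse temperature `β_c = arctanh(1/d)`, for all `n ≥ 1`,
`1 − (1 − y_0/x_0)·n^{-1/2} ≥ y_{n−1}/x_{n−1} ≥ 1 − (√6·d/√(d²−1))·n^{-1/2}`. -/
theorem critical_ratio_bounds (d : ℕ) (hd : 2 ≤ d) (n : ℕ) (hn : 1 ≤ n) :
    1 - (1 - (xy (betaCrit d) d 0).2 / (xy (betaCrit d) d 0).1) / Real.sqrt n ≥
        (xy (betaCrit d) d (n - 1)).2 / (xy (betaCrit d) d (n - 1)).1 ∧
      (xy (betaCrit d) d (n - 1)).2 / (xy (betaCrit d) d (n - 1)).1 ≥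
        1 - Real.sqrt 6 * (d : ℝ) / Real.sqrt ((d : ℝ) ^ 2 - 1) / Real.sqrt n := by
  obtain ⟨m, rfl⟩ := Nat.exists_eq_add_of_le' hn
  rw [Nat.add_sub_cancel, Nat.cast_add_one]
  have hlower := one_sub_ratio_zero_div_sqrt_le hd m
  have hupper := one_sub_ratio_le_div_sqrt hd m
  constructor <;> linarith
end

section
/- Let d ≥ 2 be an integer, n ≥ 1 an integer, and k > 0 with k² ≤ n and k/√n < 1 − ((d−1)/(d+1))^d (which guarantees K^d_{√n}(k) > 0). Define f(z) = [(d+1)z + (d−1)]^d − [(d−1)z + (d+1)]^d + (k/√n)·[(d−1)z + (d+1)]^d. Then f(z) ≤ 0 for all z with 0 < z ≤ K^d_{√n}(k), and f(z) ≥ 0 for all z with K^d_{√n}(k) ≤ z < 1. -/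
/-- `K^d_{√n}(k) = (−(d+1)(1 − k/√n)^{1/d} + (d−1)) / ((d−1)(1 − k/√n)^{1/d} − (d+1))`. -/
noncomputable def Kfun (d n : ℕ) (k : ℝ) : ℝ :=
  (-((d : ℝ) + 1) * (1 - k / Real.sqrt n) ^ (1 / (d : ℝ)) + ((d : ℝ) - 1)) /
    (((d : ℝ) - 1) * (1 - k / Real.sqrt n) ^ (1 / (d : ℝ)) - ((d : ℝ) + 1))

/-- The auxiliary polynomial
`f(z) = ((d+1)z + (d−1))^d − ((d−1)z + (d+1))^d + (k/√n)·((d−1)z + (d+1))^d`. -/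
noncomputable def fpoly (d : ℕ) (n : ℕ) (k : ℝ) (z : ℝ) : ℝ :=
  (((d : ℝ) + 1) * z + ((d : ℝ) - 1)) ^ d - (((d : ℝ) - 1) * z + ((d : ℝ) + 1)) ^ d +
    k / Real.sqrt n * (((d : ℝ) - 1) * z + ((d : ℝ) + 1)) ^ d

/-!
Put `r = (1 - k / √n) ^ (1 / d)`, so that `f z = ((d+1)z + (d-1))^d - (r((d-1)z + (d+1)))^d`. Where
both bases are nonnegative, the sign of `f` is that of their difference, which is affine in `z` and
vanishes at `K^d_{√n}(k)`. Its slope `(d+1) - (d-1)r` is positive by Bernoulli's inequality, because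
`r ^ d ≤ 2`.
-/

/-- The root in `z` of `a * z + b = r * (b * z + a)`, with the signs arranged as in `Kfun`; it is
the junk value `0` when `b * r = a`. -/
def affineRoot {F : Type*} [Field F] (a b r : F) : F :=
  (-a * r + b) / (b * r - a)

section AffineRoot

variable {F : Type*} [Field F] [LinearOrder F] [IsStrictOrderedRing F] {a b r z : F}

theorem le_affineRoot_iff (h : b * r < a) :
    z ≤ affineRoot a b r ↔ a * z + b ≤ r * (b * z + a) := by
  rw [affineRoot, le_div_iff_of_neg (sub_neg.2 h)]
  constructor <;> intro <;> linarith

theorem affineRoot_le_iff (h : b * r < a) :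
    affineRoot a b r ≤ z ↔ r * (b * z + a) ≤ a * z + b := by
  rw [affineRoot, div_le_iff_of_neg (sub_neg.2 h)]
  constructor <;> intro <;> linarith

theorem mul_affineRoot_add_nonneg (hr : 0 ≤ r) (hba : b ^ 2 ≤ a ^ 2) (h : b * r < a) :
    0 ≤ a * affineRoot a b r + b := by
  have hden : b * r - a < 0 := sub_neg.2 h
  calc 0 ≤ r * (b ^ 2 - a ^ 2) / (b * r - a) :=
        div_nonneg_of_nonpos (mul_nonpos_of_nonneg_of_nonpos hr (sub_nonpos.2 hba)) hden.le
    _ = a * affineRoot a b r + b := by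
        rw [affineRoot, ← mul_div_assoc, div_add' _ _ _ hden.ne]
        ring

theorem mul_add_pos_of_mul_add_nonneg (hb : 0 ≤ b) (hba : b < a) (hz : 0 ≤ a * z + b) :
    0 < b * z + a := by
  have ha : 0 < a := hb.trans_lt hba
  have hsq : 0 < a ^ 2 - b ^ 2 := sub_pos.2 (pow_lt_pow_left₀ hba hb two_ne_zero)
  refine pos_of_mul_pos_right (b := b * z + a) ?_ ha.le
  calc 0 < b * (a * z + b) + (a ^ 2 - b ^ 2) := add_pos_of_nonneg_of_pos (mul_nonneg hb hz) hsq
    _ = a * (b * z + a) := by ring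

variable {m : ℕ}

theorem pow_le_mul_pow_iff_le_affineRoot (hm : m ≠ 0) (hb : 0 ≤ b) (hba : b < a) (hr : 0 ≤ r)
    (h : b * r < a) (hz : 0 ≤ a * z + b) :
    (a * z + b) ^ m ≤ (r * (b * z + a)) ^ m ↔ z ≤ affineRoot a b r := by
  have hz' : 0 ≤ r * (b * z + a) := mul_nonneg hr (mul_add_pos_of_mul_add_nonneg hb hba hz).le
  rw [pow_le_pow_iff_left₀ hz hz' hm, le_affineRoot_iff h]

theorem mul_pow_le_pow_iff_affineRoot_le (hm : m ≠ 0) (hb : 0 ≤ b) (hba : b < a) (hr : 0 ≤ r)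
    (h : b * r < a) (hz : 0 ≤ a * z + b) :
    (r * (b * z + a)) ^ m ≤ (a * z + b) ^ m ↔ affineRoot a b r ≤ z := by
  have hz' : 0 ≤ r * (b * z + a) := mul_nonneg hr (mul_add_pos_of_mul_add_nonneg hb hba hz).le
  rw [pow_le_pow_iff_left₀ hz' hz hm, affineRoot_le_iff h]

end AffineRoot

theorem sub_one_mul_lt_add_one_of_pow_le_two {d : ℕ} {r : ℝ} (hr : 0 ≤ r) (h : r ^ d ≤ 2) :
    ((d : ℝ) - 1) * r < (d : ℝ) + 1 := by
  have bernoulli : 1 + d * (r - 1) ≤ r ^ d := one_add_mul_sub_le_pow (by linarith) d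
  obtain rfl | hr := hr.eq_or_lt
  · rw [mul_zero]
    positivity
  · linarith

section FPoly

variable {d n : ℕ} {k r z : ℝ}

theorem Kfun_eq_affineRoot (hd : d ≠ 0) (hr : 0 ≤ r) (hrd : r ^ d = 1 - k / √n) :
    Kfun d n k = affineRoot ((d : ℝ) + 1) ((d : ℝ) - 1) r := by
  rw [Kfun, affineRoot, ← hrd, one_div, Real.pow_rpow_inv_natCast hr hd]

theorem fpoly_eq_pow_sub_pow (hrd : r ^ d = 1 - k / √n) :
    fpoly d n k z = (((d : ℝ) + 1) * z + ((d : ℝ) - 1)) ^ d -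
      (r * (((d : ℝ) - 1) * z + ((d : ℝ) + 1))) ^ d := by
  rw [fpoly, mul_pow, hrd]
  ring

theorem fpoly_nonpos_iff (hd : d ≠ 0) (hr : 0 ≤ r) (hrd : r ^ d = 1 - k / √n)
    (hden : ((d : ℝ) - 1) * r < (d : ℝ) + 1) (hz : 0 ≤ ((d : ℝ) + 1) * z + ((d : ℝ) - 1)) :
    fpoly d n k z ≤ 0 ↔ z ≤ Kfun d n k := by
  have hd1 : (1 : ℝ) ≤ d := Nat.one_le_cast.2 (Nat.one_le_iff_ne_zero.2 hd)
  rw [fpoly_eq_pow_sub_pow hrd, sub_nonpos, Kfun_eq_affineRoot hd hr hrd]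
  exact pow_le_mul_pow_iff_le_affineRoot hd (by linarith) (by linarith) hr hden hz

theorem fpoly_nonneg_iff (hd : d ≠ 0) (hr : 0 ≤ r) (hrd : r ^ d = 1 - k / √n)
    (hden : ((d : ℝ) - 1) * r < (d : ℝ) + 1) (hz : 0 ≤ ((d : ℝ) + 1) * z + ((d : ℝ) - 1)) :
    0 ≤ fpoly d n k z ↔ Kfun d n k ≤ z := by
  have hd1 : (1 : ℝ) ≤ d := Nat.one_le_cast.2 (Nat.one_le_iff_ne_zero.2 hd)
  rw [fpoly_eq_pow_sub_pow hrd, sub_nonneg, Kfun_eq_affineRoot hd hr hrd]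
  exact mul_pow_le_pow_iff_affineRoot_le hd (by linarith) (by linarith) hr hden hz

theorem add_one_mul_Kfun_add_sub_one_nonneg (hd : d ≠ 0) (hr : 0 ≤ r)
    (hrd : r ^ d = 1 - k / √n) (hden : ((d : ℝ) - 1) * r < (d : ℝ) + 1) :
    0 ≤ ((d : ℝ) + 1) * Kfun d n k + ((d : ℝ) - 1) := by
  have hsq : ((d : ℝ) - 1) ^ 2 ≤ ((d : ℝ) + 1) ^ 2 := by linarith [d.cast_nonneg (α := ℝ)]
  rw [Kfun_eq_affineRoot hd hr hrd]
  exact mul_affineRoot_add_nonneg hr hsq hden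

end FPoly

theorem abs_div_sqrt_le_one {x y : ℝ} (hy : 0 < y) (h : x ^ 2 ≤ y) : |x / √y| ≤ 1 := by
  rw [← sq_le_one_iff_abs_le_one, div_pow, Real.sq_sqrt hy.le]
  exact (div_le_one hy).2 h

theorem fpoly_sign_general (d : ℕ) (hd : d ≠ 0) (n : ℕ) (hn : n ≠ 0) (k : ℝ)
    (hkn : k ^ 2 ≤ (n : ℝ)) :
    (∀ z : ℝ, 0 ≤ ((d : ℝ) + 1) * z + ((d : ℝ) - 1) → z ≤ Kfun d n k → fpoly d n k z ≤ 0) ∧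
      (∀ z : ℝ, Kfun d n k ≤ z → 0 ≤ fpoly d n k z) := by
  obtain ⟨hc, hc'⟩ := abs_le.1 (abs_div_sqrt_le_one (Nat.cast_pos.2 (Nat.pos_of_ne_zero hn)) hkn)
  have hs : 0 ≤ 1 - k / √n := sub_nonneg.2 hc'
  obtain ⟨r, hr, hrd⟩ : ∃ r : ℝ, 0 ≤ r ∧ r ^ d = 1 - k / √n :=
    ⟨_, Real.rpow_nonneg hs _, Real.rpow_inv_natCast_pow hs hd⟩
  have hden : ((d : ℝ) - 1) * r < (d : ℝ) + 1 :=
    sub_one_mul_lt_add_one_of_pow_le_two hr (by linarith)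
  refine ⟨fun z hz hzK ↦ (fpoly_nonpos_iff hd hr hrd hden hz).2 hzK, fun z hzK ↦ ?_⟩
  have hz : 0 ≤ ((d : ℝ) + 1) * z + ((d : ℝ) - 1) :=
    (add_one_mul_Kfun_add_sub_one_nonneg hd hr hrd hden).trans (by gcongr)
  exact (fpoly_nonneg_iff hd hr hrd hden hz).2 hzK

/-- `K^d_{√n}(k)` is the only potentially positive zero of `f`: `f ≤ 0` on `(0, K^d_{√n}(k)]`
and `f ≥ 0` on `[K^d_{√n}(k), 1)`, provided `k/√n < 1 − ((d−1)/(d+1))^d`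
(which guarantees `K^d_{√n}(k) > 0`). -/
theorem fpoly_sign (d : ℕ) (hd : 2 ≤ d) (n : ℕ) (hn : 1 ≤ n) (k : ℝ) (hk : 0 < k)
    (hkn : k ^ 2 ≤ (n : ℝ))
    (hk' : k / Real.sqrt n < 1 - (((d : ℝ) - 1) / ((d : ℝ) + 1)) ^ d) :
    (∀ z : ℝ, 0 < z → z ≤ Kfun d n k → fpoly d n k z ≤ 0) ∧
      (∀ z : ℝ, Kfun d n k ≤ z → z < 1 → 0 ≤ fpoly d n k z) := by
  have hd2 : (2 : ℝ) ≤ d := Nat.ofNat_le_cast.2 hd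
  obtain ⟨nonpos, nonneg⟩ := fpoly_sign_general d (by lia) n (by lia) k hkn
  exact ⟨fun z hz ↦ nonpos z (add_nonneg (by positivity) (by linarith)), fun z hzK _ ↦ nonneg z hzK⟩
end

section
/- Let d ≥ 2 be an integer and n an integer with n ≥ 6d²/(d²−1). Then K^d_{√n}(√6·d/√(d²−1)) ≤ 1 − (√6·d/√(d²−1))·(n−1)^{-1/2}. -/
/-!
Put `φ u = (1 + u) / (1 - u)` and `u = 1 - k / √n`. Then `K = K^d_{√n}(k)` satisfies
`φ K = φ (u ^ (1 / d)) / d`, and `φ (exp (-2 * x)) = coth x`. Since `1 - u = 2 / (1 + φ u)`,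
replacing `n` by `n - 1` costs no more than the gap `φ u ^ 2 - φ K ^ 2 ≥ 4 / k ^ 2`. This gap is
`coth x ^ 2 - (coth (x / d) / d) ^ 2 = g x - g (x / d) / d ^ 2` with `g x = coth x ^ 2 - 1 / x ^ 2`,
so it suffices that `g` is increasing and at least `2 / 3` on `(0, ∞)`.
-/

open Real

section Hyperbolic

variable {x D : ℝ}

lemma cosh_rpow_neg_third_pow_three (x : ℝ) : (cosh x ^ (-1 / 3 : ℝ)) ^ 3 = (cosh x)⁻¹ := by
  rw [← rpow_mul_natCast (cosh_pos x).le]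
  norm_num [rpow_neg_one]

lemma self_le_sinh_mul_cosh_rpow (hx : 0 ≤ x) : x ≤ sinh x * cosh x ^ (-1 / 3 : ℝ) := by
  have hderiv (y : ℝ) : HasDerivAt (fun y ↦ sinh y * cosh y ^ (-1 / 3 : ℝ))
      (cosh y * cosh y ^ (-1 / 3 : ℝ) +
        sinh y * (sinh y * (-1 / 3) * cosh y ^ (-1 / 3 - 1 : ℝ))) y :=
    (hasDerivAt_sinh y).mul ((hasDerivAt_cosh y).rpow_const (Or.inl (cosh_pos y).ne'))
  have hderiv_ge (y : ℝ) : 1 ≤ deriv (fun y ↦ sinh y * cosh y ^ (-1 / 3 : ℝ)) y := by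
    have hc := cosh_pos y
    have hroot := cosh_rpow_neg_third_pow_three y
    rw [(hderiv y).deriv, rpow_sub_one hc.ne']
    have hp : 0 < cosh y ^ (-1 / 3 : ℝ) := by positivity
    set p := cosh y ^ (-1 / 3 : ℝ)
    have hcosh : cosh y = 1 / p ^ 3 := by rw [hroot, one_div, inv_inv]
    -- The derivative is `(p⁻² + p⁻² + p⁴) / 3`, which is at least `1` by AM-GM.
    calc 1 ≤ 1 + (p ^ 2 - 1) ^ 2 * (p ^ 2 + 2) / (3 * p ^ 2) :=
          le_add_of_nonneg_right (by positivity)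
      _ = cosh y * p + (cosh y ^ 2 - 1) * (-1 / 3) * (p / cosh y) := by
          rw [hcosh]
          field_simp
          ring
      _ = cosh y * p + sinh y * (sinh y * (-1 / 3) * (p / cosh y)) := by
          rw [cosh_sq]
          ring
  simpa using mul_sub_le_image_sub_of_le_deriv
    (fun y ↦ (hderiv y).differentiableAt) hderiv_ge hx

lemma pow_three_mul_cosh_le_sinh_pow_three (hx : 0 ≤ x) : x ^ 3 * cosh x ≤ sinh x ^ 3 := by
  have hcube := pow_le_pow_left₀ hx (self_le_sinh_mul_cosh_rpow hx) 3
  rwa [mul_pow, cosh_rpow_neg_third_pow_three, ← div_eq_mul_inv, le_div_iff₀ (cosh_pos x)] at hcube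

lemma sinh_div_sqrt_le_self (hx : 0 ≤ x) : sinh x / √(1 + sinh x ^ 2 / 3) ≤ x := by
  have hderiv (y : ℝ) : HasDerivAt (fun y ↦ sinh y / √(1 + sinh y ^ 2 / 3))
      (cosh y / √(1 + sinh y ^ 2 / 3) ^ 3) y := by
    have hpos : 0 < 1 + sinh y ^ 2 / 3 := by positivity
    have hr := sqrt_pos.2 hpos
    have hsq := sq_sqrt hpos.le
    have hradicand : HasDerivAt (fun y ↦ 1 + sinh y ^ 2 / 3) (2 * sinh y * cosh y / 3) y := by
      simpa using (((hasDerivAt_sinh y).fun_pow 2).div_const 3).const_add 1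
    refine ((hasDerivAt_sinh y).fun_div (hradicand.sqrt hpos.ne') (by positivity)).congr_deriv ?_
    set r := √(1 + sinh y ^ 2 / 3)
    field_simp
    linear_combination 3 * hsq
  have hderiv_le (y : ℝ) : deriv (fun y ↦ sinh y / √(1 + sinh y ^ 2 / 3)) y ≤ 1 := by
    rw [(hderiv y).deriv, div_le_one (by positivity)]
    refine (pow_le_pow_iff_left₀ (cosh_pos y).le (by positivity) two_ne_zero).1 ?_
    calc cosh y ^ 2 = 1 + (3 : ℕ) * (sinh y ^ 2 / 3) := by
          rw [cosh_sq]
          push_cast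
          ring
      _ ≤ (1 + sinh y ^ 2 / 3) ^ 3 :=
          one_add_mul_le_pow (le_trans (by norm_num) (by positivity : 0 ≤ sinh y ^ 2 / 3)) 3
      _ = (√(1 + sinh y ^ 2 / 3) ^ 3) ^ 2 := by
          rw [pow_right_comm, sq_sqrt (by positivity)]
  simpa using image_sub_le_mul_sub_of_deriv_le
    (fun y ↦ (hderiv y).differentiableAt) hderiv_le hx

lemma monotoneOn_coth_sq_sub_inv_sq :
    MonotoneOn (fun x ↦ (cosh x / sinh x) ^ 2 - (x ^ 2)⁻¹) (Set.Ioi 0) := by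
  have hderiv {y : ℝ} (hy : 0 < y) : HasDerivAt (fun x ↦ (cosh x / sinh x) ^ 2 - (x ^ 2)⁻¹)
      (2 * (sinh y ^ 3 - y ^ 3 * cosh y) / (y ^ 3 * sinh y ^ 3)) y := by
    have hs := sinh_pos_iff.2 hy
    refine ((((hasDerivAt_cosh y).fun_div (hasDerivAt_sinh y) hs.ne').fun_pow 2).fun_sub
      ((hasDerivAt_pow 2 y).fun_inv (by positivity))).congr_deriv ?_
    rw [Nat.cast_ofNat, Nat.add_one_sub_one, pow_one, pow_one]
    field_simp
    linear_combination -(y ^ 3 * cosh y) * cosh_sq y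
  refine monotoneOn_of_hasDerivWithinAt_nonneg (convex_Ioi 0)
    (fun y hy ↦ (hderiv hy).continuousAt.continuousWithinAt)
    (fun y hy ↦ (hderiv (interior_subset hy)).hasDerivWithinAt) fun y hy ↦ ?_
  have hy : 0 < y := interior_subset hy
  have hs := sinh_pos_iff.2 hy
  have hcube := sub_nonneg.2 (pow_three_mul_cosh_le_sinh_pow_three hy.le)
  positivity

lemma two_thirds_le_coth_sq_sub_inv_sq (hx : 0 < x) :
    2 / 3 ≤ (cosh x / sinh x) ^ 2 - (x ^ 2)⁻¹ := by
  have hs := sinh_pos_iff.2 hx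
  have hsq : sinh x ^ 2 / (1 + sinh x ^ 2 / 3) ≤ x ^ 2 := by
    simpa only [div_pow, sq_sqrt (by positivity : 0 ≤ 1 + sinh x ^ 2 / 3)] using
      pow_le_pow_left₀ (by positivity) (sinh_div_sqrt_le_self hx.le) 2
  calc 2 / 3 = (cosh x / sinh x) ^ 2 - (sinh x ^ 2 / (1 + sinh x ^ 2 / 3))⁻¹ := by
        rw [div_pow, cosh_sq]
        field_simp
        ring
    _ ≤ (cosh x / sinh x) ^ 2 - (x ^ 2)⁻¹ :=
        sub_le_sub_left (inv_anti₀ (by positivity) hsq) _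

lemma two_thirds_mul_le_coth_sq_sub (hx : 0 < x) (hD : 1 ≤ D) :
    2 / 3 * (1 - 1 / D ^ 2) ≤
      (cosh x / sinh x) ^ 2 - (cosh (x / D) / sinh (x / D) / D) ^ 2 := by
  have hD₀ : 0 < D := one_pos.trans_le hD
  have hinv : 1 / D ^ 2 ≤ 1 := div_le_one_of_le₀ (one_le_pow₀ hD) (by positivity)
  have hmono : (cosh (x / D) / sinh (x / D)) ^ 2 - ((x / D) ^ 2)⁻¹ ≤
      (cosh x / sinh x) ^ 2 - (x ^ 2)⁻¹ :=
    monotoneOn_coth_sq_sub_inv_sq (div_pos hx hD₀) hx (div_le_self hx.le hD)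
  calc 2 / 3 * (1 - 1 / D ^ 2)
      ≤ ((cosh x / sinh x) ^ 2 - (x ^ 2)⁻¹) * (1 - 1 / D ^ 2) :=
        mul_le_mul_of_nonneg_right (two_thirds_le_coth_sq_sub_inv_sq hx) (sub_nonneg.2 hinv)
    _ = ((cosh x / sinh x) ^ 2 - (x ^ 2)⁻¹) -
          1 / D ^ 2 * ((cosh x / sinh x) ^ 2 - (x ^ 2)⁻¹) := by ring
    _ ≤ ((cosh x / sinh x) ^ 2 - (x ^ 2)⁻¹) -
          1 / D ^ 2 * ((cosh (x / D) / sinh (x / D)) ^ 2 - ((x / D) ^ 2)⁻¹) :=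
        sub_le_sub_left (mul_le_mul_of_nonneg_left hmono (by positivity)) _
    _ = (cosh x / sinh x) ^ 2 - (cosh (x / D) / sinh (x / D) / D) ^ 2 := by
        field_simp
        ring

end Hyperbolic

/-- The Cayley transform `u ↦ (1 + u) / (1 - u)`, mapping `[0, 1)` onto `[1, ∞)`; it takes the
junk value `0` at `u = 1`. -/
noncomputable def cayley (u : ℝ) : ℝ := (1 + u) / (1 - u)

/-- The map through which `Kfun` depends on `u = 1 - k / √n`, with a real parameter `d`: the root
`u ^ (1 / d)`, followed by division by `d` in the coordinate `cayley`. -/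
noncomputable def cayleyRoot (d u : ℝ) : ℝ :=
  (-(d + 1) * u ^ (1 / d) + (d - 1)) / ((d - 1) * u ^ (1 / d) - (d + 1))

section Cayley

variable {d u x : ℝ}

lemma cayley_pos (hu₀ : 0 ≤ u) (hu₁ : u < 1) : 0 < cayley u :=
  div_pos (by positivity) (sub_pos.2 hu₁)

lemma one_sub_eq_two_div_one_add_cayley (hu : u ≠ 1) : 1 - u = 2 / (1 + cayley u) := by
  have hsub : 1 - u ≠ 0 := sub_ne_zero.2 hu.symm
  have hadd : 1 + cayley u = 2 / (1 - u) := by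
    rw [cayley]
    field_simp
    ring
  rw [hadd, div_div_cancel₀ two_ne_zero]

lemma cayley_exp_neg_two_mul (hx : x ≠ 0) : cayley (exp (-(2 * x))) = cosh x / sinh x := by
  have hsub : exp x - exp (-x) ≠ 0 :=
    sub_ne_zero.2 fun h ↦ hx (by linarith [exp_injective h])
  have hsplit : exp (-(2 * x)) = exp (-x) / exp x := by
    rw [← exp_sub]
    ring_nf
  rw [cayley, hsplit, cosh_eq, sinh_eq]
  field_simp

lemma two_thirds_mul_le_cayley_sq_sub (hd : 1 ≤ d) (hu₀ : 0 ≤ u) (hu₁ : u < 1) :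
    2 / 3 * (1 - 1 / d ^ 2) ≤ cayley u ^ 2 - (cayley (u ^ (1 / d)) / d) ^ 2 := by
  have hd₀ : 0 < d := one_pos.trans_le hd
  rcases hu₀.eq_or_lt with rfl | hu₀
  · have hinv : 1 / d ^ 2 ≤ 1 := div_le_one_of_le₀ (one_le_pow₀ hd) (by positivity)
    have hzero : cayley 0 = 1 := by norm_num [cayley]
    rw [zero_rpow (by positivity), hzero, div_pow, one_pow]
    linarith
  · obtain ⟨x, hx, rfl⟩ : ∃ x, 0 < x ∧ exp (-(2 * x)) = u := by
      refine ⟨-log u / 2, by linarith [log_neg hu₀ hu₁], ?_⟩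
      rw [mul_div_cancel₀ _ two_ne_zero, neg_neg, exp_log hu₀]
    have hroot : exp (-(2 * x)) ^ (1 / d) = exp (-(2 * (x / d))) := by
      rw [← exp_mul]
      ring_nf
    rw [hroot, cayley_exp_neg_two_mul hx.ne', cayley_exp_neg_two_mul (by positivity)]
    exact two_thirds_mul_le_coth_sq_sub hx hd

lemma one_sub_cayleyRoot (hd : 0 < d) (hu₀ : 0 ≤ u) (hu₁ : u < 1) :
    1 - cayleyRoot d u = 2 / (1 + cayley (u ^ (1 / d)) / d) := by
  have hs₀ : 0 ≤ u ^ (1 / d) := rpow_nonneg hu₀ _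
  have hs₁ : 0 < 1 - u ^ (1 / d) := sub_pos.2 (rpow_lt_one hu₀ hu₁ (by positivity))
  rw [cayleyRoot, cayley]
  set s := u ^ (1 / d)
  have hden : (d - 1) * s - (d + 1) = -(d * (1 - s) + (1 + s)) := by ring
  have hpos : 0 < d * (1 - s) + (1 + s) := by positivity
  have hadd : 1 + (1 + s) / (1 - s) / d = (d * (1 - s) + (1 + s)) / (d * (1 - s)) := by
    field_simp
  rw [hden, hadd]
  field_simp
  ring

end Cayley

lemma sqrt_six_mul_div_sqrt_sq {d : ℝ} (hd : 1 < d) :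
    (√6 * d / √(d ^ 2 - 1)) ^ 2 = 6 * d ^ 2 / (d ^ 2 - 1) := by
  rw [div_pow, mul_pow, sq_sqrt (by norm_num), sq_sqrt (by nlinarith)]

lemma div_sqrt_sub_one_le_two_div_one_add {n k A C : ℝ} (hn : 0 < n) (hk : 0 < k) (hA : 0 ≤ A)
    (hC : 0 ≤ C) (h : k / √n = 2 / (1 + C)) (hAC : 4 ≤ k ^ 2 * (C ^ 2 - A ^ 2)) :
    k / √(n - 1) ≤ 2 / (1 + A) := by
  have hle : A ≤ C := by
    have hpos : 0 < C ^ 2 - A ^ 2 := pos_of_mul_pos_right (by linarith) (sq_nonneg k)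
    exact (pow_le_pow_iff_left₀ hA hC two_ne_zero).1 (sub_nonneg.1 hpos.le)
  have hsqrt : √n = k * (1 + C) / 2 := by
    rw [div_eq_div_iff (by positivity) (by positivity)] at h
    linarith
  have hsq : (k * (1 + A) / 2) ^ 2 ≤ n - 1 := by
    calc (k * (1 + A) / 2) ^ 2
        = √n ^ 2 - k ^ 2 * (C ^ 2 - A ^ 2) / 4 - k ^ 2 * (C - A) / 2 := by
          rw [hsqrt]
          ring
      _ ≤ √n ^ 2 - 1 := by
          have hcross : 0 ≤ k ^ 2 * (C - A) := mul_nonneg (sq_nonneg k) (sub_nonneg.2 hle)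
          linarith
      _ = n - 1 := by rw [sq_sqrt hn.le]
  calc k / √(n - 1) ≤ k / (k * (1 + A) / 2) :=
        div_le_div_of_nonneg_left hk.le (by positivity) (le_sqrt_of_sq_le hsq)
    _ = 2 / (1 + A) := by field_simp

theorem Kfun_upper_bound_general {d n k : ℝ} (hd : 1 < d) (hk : √6 * d / √(d ^ 2 - 1) ≤ k)
    (hn : k ^ 2 ≤ n) : cayleyRoot d (1 - k / √n) ≤ 1 - k / √(n - 1) := by
  have hd₀ : 0 < d := one_pos.trans hd
  have hd_sq : 0 < d ^ 2 - 1 := sub_pos.2 (one_lt_pow₀ hd two_ne_zero)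
  have hk₀ : 0 < k := (by positivity : 0 < √6 * d / √(d ^ 2 - 1)).trans_le hk
  have hn₀ : 0 < n := (pow_pos hk₀ 2).trans_le hn
  obtain ⟨u, hu⟩ : ∃ u, 1 - k / √n = u := ⟨_, rfl⟩
  have hu₀ : 0 ≤ u :=
    hu ▸ sub_nonneg.2 (div_le_one_of_le₀ (le_sqrt_of_sq_le hn) (sqrt_nonneg n))
  have hu₁ : u < 1 := hu ▸ sub_lt_self 1 (by positivity)
  have hroot := cayley_pos (rpow_nonneg hu₀ _) (rpow_lt_one hu₀ hu₁ (one_div_pos.2 hd₀))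
  have hC : k / √n = 2 / (1 + cayley u) := by
    rw [← one_sub_eq_two_div_one_add_cayley hu₁.ne, ← hu, sub_sub_cancel]
  have hgap : 4 ≤ k ^ 2 * (cayley u ^ 2 - (cayley (u ^ (1 / d)) / d) ^ 2) := by
    calc 4 = (√6 * d / √(d ^ 2 - 1)) ^ 2 * (2 / 3 * (1 - 1 / d ^ 2)) := by
          rw [sqrt_six_mul_div_sqrt_sq hd]
          field_simp
          norm_num
      _ ≤ k ^ 2 * (cayley u ^ 2 - (cayley (u ^ (1 / d)) / d) ^ 2) :=
          mul_le_mul (pow_le_pow_left₀ (by positivity) hk 2)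
            (two_thirds_mul_le_cayley_sq_sub hd.le hu₀ hu₁)
            (by field_simp; linarith) (sq_nonneg k)
  rw [hu, le_sub_comm, one_sub_cayleyRoot hd₀ hu₀ hu₁]
  exact div_sqrt_sub_one_le_two_div_one_add hn₀ hk₀ (by positivity) (cayley_pos hu₀ hu₁).le
    hC hgap

/-- **Upper bound on `K`**: for `d ≥ 2` and `n ≥ 6d²/(d²−1)`,
`K^d_{√n}(√6·d/√(d²−1)) ≤ 1 − (√6·d/√(d²−1))·(n−1)^{-1/2}`. -/
theorem Kfun_upper_bound (d : ℕ) (hd : 2 ≤ d) (n : ℕ)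
    (hn : 6 * (d : ℝ) ^ 2 / ((d : ℝ) ^ 2 - 1) ≤ (n : ℝ)) :
    Kfun d n (Real.sqrt 6 * (d : ℝ) / Real.sqrt ((d : ℝ) ^ 2 - 1)) ≤
      1 - Real.sqrt 6 * (d : ℝ) / Real.sqrt ((d : ℝ) ^ 2 - 1) / Real.sqrt ((n : ℝ) - 1) := by
  have hk := sqrt_six_mul_div_sqrt_sq (d := (d : ℝ)) (by exact_mod_cast hd)
  exact Kfun_upper_bound_general (by exact_mod_cast hd) le_rfl (hk.trans_le hn)
end

section
/- For every integer d ≥ 2 and every real r ≥ 1, the function F_d(r) = 2·√(d²(6r² − 1) + 1)·((1 − 1/r)^{1/d} − 1) + √6·((−d + 1)(1 − 1/r)^{1/d} + (d + 1)) satisfies F_d(r) ≤ 0. -/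
/-!
Write `s = (1 - 1 / r) ^ (1 / d)` and `c = (1 + s) / (1 - s)`. Dividing by `1 - s > 0`, the claim
becomes `√6 * (d + c) ≤ 2 * √(d² (6 r² - 1) + 1)`. Putting `s = exp (-2 t)`, one has `c = coth t`
and `2 r - 1 = coth (d t)`, and what is needed after squaring is that both `x coth x` and
`x² (coth² x - 2 / 3) = x² (1 / sinh² x + 1 / 3)` increase from `t` to `d t`. The second fact
implies the first, and by differentiation it amounts to `x cosh x ≤ sinh x + sinh³ x / 3`. In terms
of `s` it compares the values of the Koebe function at `s` and `s ^ d`, a form that includes the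
limiting case `r = 1`, where `s = 0` and `t = ∞`.
-/

open Real Set

lemma self_le_sinh_mul_cosh {x : ℝ} (hx : 0 ≤ x) : x ≤ sinh x * cosh x :=
  (self_le_sinh_iff.2 hx).trans (le_mul_of_one_le_right (sinh_nonneg_iff.2 hx) (one_le_cosh x))

lemma mul_cosh_le_sinh_add_sinh_pow_three_div {x : ℝ} (hx : 0 ≤ x) :
    x * cosh x ≤ sinh x + sinh x ^ 3 / 3 := by
  have hderiv (y : ℝ) : HasDerivAt (fun y ↦ sinh y + sinh y ^ 3 / 3 - y * cosh y)
      (sinh y * (sinh y * cosh y - y)) y := by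
    refine (((hasDerivAt_sinh y).fun_add (((hasDerivAt_sinh y).fun_pow 3).div_const 3)).fun_sub
      ((hasDerivAt_id' y).fun_mul (hasDerivAt_cosh y))).congr_deriv ?_
    push_cast
    ring
  have hmono : MonotoneOn (fun y ↦ sinh y + sinh y ^ 3 / 3 - y * cosh y) (Ici 0) := by
    refine monotoneOn_of_hasDerivWithinAt_nonneg (convex_Ici 0) (by fun_prop)
      (fun y _ ↦ (hderiv y).hasDerivWithinAt) fun y hy ↦ ?_
    have hy : 0 ≤ y := interior_subset hy
    exact mul_nonneg (sinh_nonneg_iff.2 hy) (sub_nonneg.2 (self_le_sinh_mul_cosh hy))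
  simpa using hmono self_mem_Ici hx hx

lemma monotoneOn_sq_mul_one_div_sinh_sq_add_third :
    MonotoneOn (fun x ↦ x ^ 2 * (1 / sinh x ^ 2 + 1 / 3)) (Ioi 0) := by
  have hderiv (x : ℝ) (hx : 0 < x) : HasDerivAt (fun x ↦ x ^ 2 * (1 / sinh x ^ 2 + 1 / 3))
      (2 * x * (sinh x + sinh x ^ 3 / 3 - x * cosh x) / sinh x ^ 3) x := by
    have hsinh : sinh x ≠ 0 := (sinh_pos_iff.2 hx).ne'
    refine ((hasDerivAt_pow 2 x).fun_mul (((hasDerivAt_const x 1).fun_div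
      ((hasDerivAt_sinh x).fun_pow 2) (pow_ne_zero 2 hsinh)).add_const (1 / 3))).congr_deriv ?_
    push_cast
    field_simp
    ring
  refine monotoneOn_of_hasDerivWithinAt_nonneg (convex_Ioi 0)
    (fun x hx ↦ (hderiv x hx).continuousAt.continuousWithinAt)
    (fun x hx ↦ (hderiv x (interior_subset hx)).hasDerivWithinAt) fun x hx ↦ ?_
  have hx : 0 < x := interior_subset hx
  have : 0 < sinh x := sinh_pos_iff.2 hx
  have hnum := sub_nonneg.2 (mul_cosh_le_sinh_add_sinh_pow_three_div hx.le)
  positivity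

/-- The Koebe function `s / (1 - s)²`, here on the real line. It expresses `1 / (4 sinh² x)`
as a rational function of `s = exp (-2 x)`; at `s = 1` it has the junk value `0`. -/
noncomputable def koebe (s : ℝ) : ℝ := s / (1 - s) ^ 2

lemma koebe_exp_neg_two_mul (x : ℝ) : koebe (exp (-2 * x)) = 1 / sinh x ^ 2 / 4 := by
  have hsq : exp (-2 * x) = exp (-x) ^ 2 := by rw [← exp_nat_mul]; push_cast; ring_nf
  have hsinh : 2 * exp (-x) * sinh x = 1 - exp (-2 * x) := by
    have hinv : exp x * exp (-x) = 1 := by rw [← exp_add, add_neg_cancel, exp_zero]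
    rw [hsq, sinh_eq]
    linear_combination hinv
  rw [koebe, ← hsinh, hsq]
  field_simp
  norm_num

lemma koebe_one_sub_one_div {r : ℝ} (hr : r ≠ 0) : koebe (1 - 1 / r) = r * (r - 1) := by
  rw [koebe, sub_sub_cancel]
  field_simp

lemma one_add_div_one_sub_sq {s : ℝ} (hs : s ≠ 1) :
    ((1 + s) / (1 - s)) ^ 2 = 1 + 4 * koebe s := by
  have : 1 - s ≠ 0 := sub_ne_zero.2 hs.symm
  rw [koebe]
  field_simp
  ring

lemma koebe_add_le_sq_mul_koebe_rpow_add {d s : ℝ} (hd : 1 ≤ d) (hs₀ : 0 ≤ s) (hs₁ : s < 1) :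
    koebe s + 1 / 12 ≤ d ^ 2 * (koebe (s ^ d) + 1 / 12) := by
  rcases hs₀.eq_or_lt with rfl | hs₀
  · rw [zero_rpow (by positivity)]
    have hd_sq : 1 ≤ d ^ 2 := one_le_pow₀ hd
    simp only [koebe, zero_div]
    linarith
  · obtain ⟨t, rfl⟩ : ∃ t, exp (-2 * t) = s := by
      refine ⟨-log s / 2, ?_⟩
      rw [neg_mul_comm, neg_div, neg_neg, mul_div_cancel₀ _ two_ne_zero, exp_log hs₀]
    have ht : 0 < t := by simpa using hs₁
    have hmono := monotoneOn_sq_mul_one_div_sinh_sq_add_third ht (by positivity : 0 < d * t)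
      (le_mul_of_one_le_left ht.le hd)
    have hpow : exp (-2 * t) ^ d = exp (-2 * (d * t)) := by rw [← exp_mul]; ring_nf
    rw [hpow, koebe_exp_neg_two_mul, koebe_exp_neg_two_mul]
    refine le_of_mul_le_mul_left ?_ (pow_pos ht 2)
    linear_combination hmono / 4

lemma sqrt_six_mul_add_le {d r c : ℝ} (hd : 1 ≤ d) (hr : 1 / 2 ≤ r)
    (h : c ^ 2 - 2 / 3 ≤ d ^ 2 * ((2 * r - 1) ^ 2 - 2 / 3)) :
    √6 * (d + c) ≤ 2 * √(d ^ 2 * (6 * r ^ 2 - 1) + 1) := by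
  have hd_sq : 1 ≤ d ^ 2 := one_le_pow₀ hd
  have hlin : c ≤ d * (2 * r - 1) :=
    le_of_sq_le_sq (by linear_combination h + 2 / 3 * hd_sq)
      (mul_nonneg (by linarith) (by linarith))
  have hsq : 6 * (d + c) ^ 2 ≤ 4 * (d ^ 2 * (6 * r ^ 2 - 1) + 1) := by
    linear_combination 6 * h + 12 * d * hlin
  have hrad : 0 ≤ d ^ 2 * (6 * r ^ 2 - 1) + 1 := by linarith [sq_nonneg (d + c)]
  refine le_of_sq_le_sq ?_ (by positivity)
  rw [mul_pow, mul_pow, sq_sqrt hrad, sq_sqrt (by norm_num)]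
  linarith

theorem F_nonpos_general (d : ℝ) (hd : 1 ≤ d) (r : ℝ) (hr : 1 ≤ r) :
    2 * √(d ^ 2 * (6 * r ^ 2 - 1) + 1) * ((1 - 1 / r) ^ (1 / d) - 1) +
      √6 * ((-d + 1) * (1 - 1 / r) ^ (1 / d) + (d + 1)) ≤ 0 := by
  have hr₀ : 0 < r := one_pos.trans_le hr
  have hd₀ : 0 < d := one_pos.trans_le hd
  have hp₀ : 0 ≤ 1 - 1 / r := sub_nonneg.2 ((div_le_one hr₀).2 hr)
  have hp₁ : 1 - 1 / r < 1 := sub_lt_self 1 (one_div_pos.2 hr₀)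
  set s := (1 - 1 / r) ^ (1 / d)
  have hs₀ : 0 ≤ s := rpow_nonneg hp₀ _
  have hs₁ : s < 1 := rpow_lt_one hp₀ hp₁ (one_div_pos.2 hd₀)
  have hpow : s ^ d = 1 - 1 / r := by rw [← rpow_mul hp₀, one_div_mul_cancel hd₀.ne', rpow_one]
  have hkoebe := koebe_add_le_sq_mul_koebe_rpow_add hd hs₀ hs₁
  rw [hpow, koebe_one_sub_one_div hr₀.ne'] at hkoebe
  have hsub : 0 < 1 - s := sub_pos.2 hs₁
  have hbound : √6 * (d + (1 + s) / (1 - s)) ≤ 2 * √(d ^ 2 * (6 * r ^ 2 - 1) + 1) := by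
    refine sqrt_six_mul_add_le hd (by linarith) ?_
    rw [one_add_div_one_sub_sq hs₁.ne]
    linear_combination 4 * hkoebe
  have hcancel : (1 + s) / (1 - s) * (1 - s) = 1 + s := div_mul_cancel₀ _ hsub.ne'
  linear_combination (1 - s) * hbound - √6 * hcancel

/-- For every integer `d ≥ 2` and real `r ≥ 1`,
`F_d(r) = 2√(d²(6r² − 1) + 1)·((1 − 1/r)^{1/d} − 1) + √6·((−d+1)(1 − 1/r)^{1/d} + (d+1)) ≤ 0`. -/
theorem F_nonpos (d : ℕ) (hd : 2 ≤ d) (r : ℝ) (hr : 1 ≤ r) :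
    2 * Real.sqrt ((d : ℝ) ^ 2 * (6 * r ^ 2 - 1) + 1) *
          ((1 - 1 / r) ^ (1 / (d : ℝ)) - 1) +
        Real.sqrt 6 * ((-(d : ℝ) + 1) * (1 - 1 / r) ^ (1 / (d : ℝ)) + ((d : ℝ) + 1)) ≤ 0 :=
  F_nonpos_general d (by exact_mod_cast one_le_two.trans hd) r hr
end

section
/- For every integer d ≥ 2 and every integer n ≥ 2, at the critical inverse temperature β = β_c = arctanh(1/d) the inequality K^d_{√n}(1 − y_0/x_0) ≥ 1 − (1 − y_0/x_0)·(n−1)^{-1/2} holds, where x_0 = (e^{β_c(d+1)} + e^{−β_c(d+1)})^d and y_0 = (e^{β_c(d−1)} + e^{−β_c(d−1)})^d. -/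
/-- `x_0 = (e^{β_c(d+1)} + e^{−β_c(d+1)})^d` at criticality. -/
noncomputable def xzero (d : ℕ) : ℝ :=
  (Real.exp (betaCrit d * ((d : ℝ) + 1)) + Real.exp (-betaCrit d * ((d : ℝ) + 1))) ^ d

/-- `y_0 = (e^{β_c(d−1)} + e^{−β_c(d−1)})^d` at criticality. -/
noncomputable def yzero (d : ℕ) : ℝ :=
  (Real.exp (betaCrit d * ((d : ℝ) - 1)) + Real.exp (-betaCrit d * ((d : ℝ) - 1))) ^ d

/-!
Put `1 - k / √n = e^{-2L}`. Since `(1 - k / √n)^{1/d} = (1 - tanh (L/d)) / (1 + tanh (L/d))`,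
`K^d_{√n}(k) = (1 - d tanh (L/d)) / (1 + d tanh (L/d))`, and `d tanh (L/d) ≤ L` gives the bound
`K^d_{√n}(k) ≥ (1 - L) / (1 + L)`, from which `d` has disappeared. With `w = k / √(n - 1)`, the
right-hand side is at least `1 - w` exactly when `L ≤ w / (2 - w)`, that is, when
`e^{-2w / (2 - w)} ≤ 1 - k / √n`. The second-order Taylor bound for `exp` at `2w / (2 - w)` gives
`e^{-2w / (2 - w)} ≤ 1 - 4w / (4 + w²)`, and `k / √n ≤ 4w / (4 + w²)` for `0 ≤ k ≤ 1` because
`(n - 3/4)² ≤ n (n - 1)`.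
-/

section Hyperbolic

lemma exp_neg_two_mul_eq_tanh (x : ℝ) :
    Real.exp (-(2 * x)) = (1 - Real.tanh x) / (1 + Real.tanh x) := by
  rw [Real.tanh_eq, show -(2 * x) = -x - x by ring, Real.exp_sub]
  have := Real.exp_pos x
  have := Real.exp_pos (-x)
  field_simp
  ring

lemma tanh_nonneg_of_nonneg {x : ℝ} (hx : 0 ≤ x) : 0 ≤ Real.tanh x := by
  rw [Real.tanh_eq_sinh_div_cosh]
  exact div_nonneg (Real.sinh_nonneg_iff.2 hx) (Real.cosh_pos x).le

lemma tanh_le_self_of_nonneg {x : ℝ} (hx : 0 ≤ x) : Real.tanh x ≤ x := by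
  have hexp : 1 ≤ Real.exp (2 * x) := Real.one_le_exp (by positivity)
  have hlog := Real.le_log_one_add_of_nonneg (sub_nonneg.2 hexp)
  have htanh : 2 * (Real.exp (2 * x) - 1) / (Real.exp (2 * x) - 1 + 2) = 2 * Real.tanh x := by
    have hden : Real.exp (2 * x) - 1 + 2 = Real.exp (2 * x) + 1 := by ring
    rw [hden, Real.tanh_eq, Real.exp_neg, two_mul x, Real.exp_add]
    have := Real.exp_pos x
    field_simp
  rw [htanh, add_sub_cancel, Real.log_exp] at hlog
  linarith

lemma exp_neg_le_one_sub_four_mul_div {w : ℝ} (hw₀ : 0 ≤ w) (hw₂ : w < 2) :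
    Real.exp (-(2 * (w / (2 - w)))) ≤ 1 - 4 * w / (4 + w ^ 2) := by
  have h2w : 0 < 2 - w := sub_pos.2 hw₂
  have htaylor := Real.quadratic_le_exp_of_nonneg (x := 2 * (w / (2 - w))) (by positivity)
  calc Real.exp (-(2 * (w / (2 - w))))
      = (Real.exp (2 * (w / (2 - w))))⁻¹ := Real.exp_neg _
    _ ≤ (1 + 2 * (w / (2 - w)) + (2 * (w / (2 - w))) ^ 2 / 2)⁻¹ :=
      inv_anti₀ (by positivity) htaylor
    _ = 1 - 4 * w / (4 + w ^ 2) := by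
      field_simp
      ring

end Hyperbolic

lemma antitoneOn_one_sub_div_one_add :
    AntitoneOn (fun x : ℝ ↦ (1 - x) / (1 + x)) (Set.Ioi (-1)) := by
  intro x hx y hy hxy
  rw [Set.mem_Ioi] at hx hy
  change (1 - y) / (1 + y) ≤ (1 - x) / (1 + x)
  rw [div_le_div_iff₀ (by linarith) (by linarith)]
  linarith

lemma four_mul_sub_one_add_one_le_sqrt_mul_sqrt {m : ℝ} (hm : 9 / 8 ≤ m) :
    4 * (m - 1) + 1 ≤ 4 * (√(m - 1) * √m) := by
  have h : m - 3 / 4 ≤ √((m - 1) * m) := Real.le_sqrt_of_sq_le (by linarith)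
  rw [Real.sqrt_mul (by linarith)] at h
  linarith

lemma div_sqrt_le_four_mul_div {m k : ℝ} (hm : 9 / 8 ≤ m) (hk : k ∈ Set.Icc 0 1) :
    k / √m ≤ 4 * (k / √(m - 1)) / (4 + (k / √(m - 1)) ^ 2) := by
  obtain ⟨hk₀, hk₁⟩ := hk
  have hpos : 0 < √m := Real.sqrt_pos.2 (by linarith)
  have hpos' : 0 < √(m - 1) := Real.sqrt_pos.2 (by linarith)
  have hsq : √(m - 1) ^ 2 = m - 1 := Real.sq_sqrt (by linarith)
  have hk_sq : k ^ 2 ≤ 1 := pow_le_one₀ hk₀ hk₁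
  have hsqrt : 4 * √(m - 1) ^ 2 + k ^ 2 ≤ 4 * √(m - 1) * √m := by
    linarith [four_mul_sub_one_add_one_le_sqrt_mul_sqrt hm]
  calc k / √m ≤ k * (4 * √(m - 1) / (4 * √(m - 1) ^ 2 + k ^ 2)) := by
        rw [div_eq_mul_one_div]
        refine mul_le_mul_of_nonneg_left ?_ hk₀
        rw [div_le_div_iff₀ hpos (by positivity)]
        linarith
    _ = 4 * (k / √(m - 1)) / (4 + (k / √(m - 1)) ^ 2) := by field_simp

section Kfun

variable {d n : ℕ} {k L : ℝ}

lemma Kfun_eq_tanh (hL : 0 ≤ L) (hexp : Real.exp (-(2 * L)) = 1 - k / √n) :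
    Kfun d n k = (1 - d * Real.tanh (L / d)) / (1 + d * Real.tanh (L / d)) := by
  have htanh : 0 ≤ Real.tanh (L / d) := tanh_nonneg_of_nonneg (by positivity)
  have hroot : (1 - k / √n) ^ (1 / (d : ℝ)) =
      (1 - Real.tanh (L / d)) / (1 + Real.tanh (L / d)) := by
    rw [← hexp, ← Real.exp_mul, ← exp_neg_two_mul_eq_tanh]
    ring_nf
  rw [Kfun, hroot]
  generalize Real.tanh (L / d) = τ at htanh ⊢
  have hden : ((d : ℝ) - 1) * ((1 - τ) / (1 + τ)) - (d + 1) = -2 * (1 + d * τ) / (1 + τ) := by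
    field_simp
    ring
  have hnum : -((d : ℝ) + 1) * ((1 - τ) / (1 + τ)) + (d - 1) = -2 * (1 - d * τ) / (1 + τ) := by
    field_simp
    ring
  rw [hden, hnum]
  field_simp

lemma one_sub_div_one_add_le_Kfun (hd : 1 ≤ d) (hL : 0 ≤ L)
    (hexp : Real.exp (-(2 * L)) = 1 - k / √n) :
    (1 - L) / (1 + L) ≤ Kfun d n k := by
  have hd' : (0 : ℝ) < d := by exact_mod_cast hd
  have hLd : 0 ≤ L / d := by positivity
  have hnonneg : 0 ≤ d * Real.tanh (L / d) := mul_nonneg hd'.le (tanh_nonneg_of_nonneg hLd)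
  have hle : d * Real.tanh (L / d) ≤ L := by
    calc d * Real.tanh (L / d) ≤ d * (L / d) := by gcongr; exact tanh_le_self_of_nonneg hLd
      _ = L := mul_div_cancel₀ L hd'.ne'
  rw [Kfun_eq_tanh hL hexp]
  exact antitoneOn_one_sub_div_one_add (Set.mem_Ioi.2 (by linarith)) (Set.mem_Ioi.2 (by linarith))
    hle

theorem Kfun_lower_bound_at_y0x0_general (hd : 1 ≤ d) (hn : 2 ≤ n) (hk : k ∈ Set.Icc 0 1) :
    1 - k / √((n : ℝ) - 1) ≤ Kfun d n k := by
  have hn' : (2 : ℝ) ≤ n := by exact_mod_cast hn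
  set w := k / √((n : ℝ) - 1)
  have hw₀ : 0 ≤ w := div_nonneg hk.1 (Real.sqrt_nonneg _)
  have hw₁ : w ≤ 1 :=
    div_le_one_of_le₀ (hk.2.trans (Real.one_le_sqrt.2 (by linarith))) (Real.sqrt_nonneg _)
  have ht₀ : 0 ≤ k / √n := div_nonneg hk.1 (Real.sqrt_nonneg _)
  have hexp_le : Real.exp (-(2 * (w / (2 - w)))) ≤ 1 - k / √n :=
    (exp_neg_le_one_sub_four_mul_div hw₀ (by linarith)).trans
      (sub_le_sub_left (div_sqrt_le_four_mul_div (by linarith) hk) 1)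
  obtain ⟨L, hL⟩ : ∃ L, Real.exp (-(2 * L)) = 1 - k / √n :=
    ⟨-(Real.log (1 - k / √n) / 2), by
      rw [mul_neg, neg_neg, mul_div_cancel₀ _ two_ne_zero,
        Real.exp_log ((Real.exp_pos _).trans_le hexp_le)]⟩
  have hL₀ : 0 ≤ L := by
    have := Real.exp_le_one_iff.1 (hL.trans_le (sub_le_self 1 ht₀))
    linarith
  have hLw : L ≤ w / (2 - w) := by
    have := Real.exp_le_exp.1 (hexp_le.trans_eq hL.symm)
    linarith
  calc 1 - w = (1 - w / (2 - w)) / (1 + w / (2 - w)) := by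
        have : 2 - w ≠ 0 := by linarith
        field_simp
        ring
    _ ≤ (1 - L) / (1 + L) :=
      antitoneOn_one_sub_div_one_add (Set.mem_Ioi.2 (by linarith)) (Set.mem_Ioi.2 (by linarith)) hLw
    _ ≤ Kfun d n k := one_sub_div_one_add_le_Kfun hd hL₀ hL

end Kfun

section CriticalPoint

variable (d : ℕ)

lemma xzero_eq_two_mul_cosh_pow :
    xzero d = (2 * Real.cosh (betaCrit d * (d + 1))) ^ d := by
  rw [xzero, Real.cosh_eq, neg_mul, mul_div_cancel₀ _ two_ne_zero]

lemma yzero_eq_two_mul_cosh_pow :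
    yzero d = (2 * Real.cosh (betaCrit d * (d - 1))) ^ d := by
  rw [yzero, Real.cosh_eq, neg_mul, mul_div_cancel₀ _ two_ne_zero]

lemma yzero_le_xzero : yzero d ≤ xzero d := by
  rw [xzero_eq_two_mul_cosh_pow, yzero_eq_two_mul_cosh_pow]
  have habs : |(d : ℝ) - 1| ≤ |(d : ℝ) + 1| :=
    abs_le_abs (by linarith) (by linarith [d.cast_nonneg (α := ℝ)])
  gcongr
  rw [Real.cosh_le_cosh, abs_mul, abs_mul]
  gcongr

lemma one_sub_yzero_div_xzero_mem_Icc : 1 - yzero d / xzero d ∈ Set.Icc 0 1 := by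
  have hx : 0 ≤ xzero d := by rw [xzero]; positivity
  have hy : 0 ≤ yzero d := by rw [yzero]; positivity
  exact Set.Icc.one_sub_mem ⟨div_nonneg hy hx, div_le_one_of_le₀ (yzero_le_xzero d) hx⟩

end CriticalPoint

/-- **Lower bound on `K` at `k = 1 − y_0/x_0`**: for all `d ≥ 2` and `n ≥ 2`,
`K^d_{√n}(1 − y_0/x_0) ≥ 1 − (1 − y_0/x_0)·(n−1)^{-1/2}`. -/
theorem Kfun_lower_bound_at_y0x0 (d : ℕ) (hd : 2 ≤ d) (n : ℕ) (hn : 2 ≤ n) :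
    Kfun d n (1 - yzero d / xzero d) ≥
      1 - (1 - yzero d / xzero d) / Real.sqrt ((n : ℝ) - 1) :=
  Kfun_lower_bound_at_y0x0_general (one_le_two.trans hd) hn (one_sub_yzero_div_xzero_mem_Icc d)
end

section
/- For every integer d ≥ 2, every real k with 0 < k < 1, and every real n ≥ 1, the function Q_{d,k}(n) = (d(k − 2√(n−1)) − k)·(((√n − k)/√n)^{1/d} − 1) − 2k satisfies Q_{d,k}(n) ≤ 0. -/
/-- `Q_{d,k}(n) = (d(k − 2√(n−1)) − k)·(((√n − k)/√n)^{1/d} − 1) − 2k`. -/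
noncomputable def Qfun (d : ℕ) (k : ℝ) (n : ℝ) : ℝ :=
  ((d : ℝ) * (k - 2 * Real.sqrt (n - 1)) - k) *
      (((Real.sqrt n - k) / Real.sqrt n) ^ (1 / (d : ℝ)) - 1) -
    2 * k

/-!
Put `s = √n`, `y = (s - k) / s` and `v = y ^ (1 / d)`. Clearing signs, the claim reads
`d * (2 * √(n - 1) - k) * (1 - v) ≤ k * (1 + v)`.

The logarithmic mean `(1 - t) / (-log t)` of `1` and `t` lies between their geometric and arithmetic
means. As `log v = log y / d`, combining the lower bound at `y` with the upper bound at `v`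
eliminates the logarithm and gives `d * (2 * √y) * (1 - v) ≤ (1 - y) * (1 + v)`. Multiplied by `s`,
this is the claim with `2 * s * √y` in place of `2 * √(n - 1) - k`; the former is the larger of the
two because `y ≤ √y` and `3 * k ^ 2 ≤ 4`.
-/

theorem one_add_mul_log_le_two_mul_sub_one {t : ℝ} (ht0 : 0 < t) (ht1 : t ≤ 1) :
    (1 + t) * Real.log t ≤ 2 * (t - 1) := by
  have h := Real.le_log_one_add_of_nonneg (sub_nonneg.2 (one_le_inv_iff₀.2 ⟨ht0, ht1⟩))
  have hden : t⁻¹ - 1 + 2 = (1 + t) / t := by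
    field_simp
    ring
  have hlhs : 2 * (t⁻¹ - 1) / (t⁻¹ - 1 + 2) = 2 * (1 - t) / (1 + t) := by
    rw [hden]
    field_simp
  rw [hlhs, add_sub_cancel, Real.log_inv, div_le_iff₀ (by positivity)] at h
  linarith

theorem sub_one_le_sqrt_mul_log {t : ℝ} (ht0 : 0 < t) (ht1 : t ≤ 1) :
    t - 1 ≤ √t * Real.log t := by
  have hsqrt : 0 < √t := Real.sqrt_pos.2 ht0
  have hlog : Real.log √t ≤ 0 := Real.log_nonpos hsqrt.le (Real.sqrt_le_one.2 ht1)
  have hsinh : (√t - (√t)⁻¹) / 2 ≤ Real.log t / 2 := by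
    rw [← Real.sinh_log hsqrt, ← Real.log_sqrt ht0.le]
    exact Real.sinh_le_self_iff.2 hlog
  calc t - 1 = 2 * √t * ((√t - (√t)⁻¹) / 2) := by
        field_simp
        rw [Real.sq_sqrt ht0.le]
    _ ≤ 2 * √t * (Real.log t / 2) := by gcongr
    _ = √t * Real.log t := by ring

theorem two_mul_sqrt_mul_one_sub_rpow_le {a y : ℝ} (ha : 0 ≤ a) (hy0 : 0 ≤ y) (hy1 : y ≤ 1) :
    2 * √y * (1 - y ^ a) ≤ a * (1 - y) * (1 + y ^ a) := by
  obtain rfl | hy := hy0.eq_or_lt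
  · simp only [Real.sqrt_zero, mul_zero, zero_mul]
    positivity
  have hlog : (1 + y ^ a) * (a * Real.log y) ≤ 2 * (y ^ a - 1) := by
    rw [← Real.log_rpow hy]
    exact one_add_mul_log_le_two_mul_sub_one (by positivity) (Real.rpow_le_one hy0 hy1 ha)
  calc 2 * √y * (1 - y ^ a) = -(√y * (2 * (y ^ a - 1))) := by ring
    _ ≤ -(√y * ((1 + y ^ a) * (a * Real.log y))) := by gcongr
    _ = -(a * (1 + y ^ a) * (√y * Real.log y)) := by ring
    _ ≤ -(a * (1 + y ^ a) * (y - 1)) := by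
        gcongr
        exact sub_one_le_sqrt_mul_log hy hy1
    _ = a * (1 - y) * (1 + y ^ a) := by ring

theorem two_mul_sqrt_sq_sub_one_sub_le {k s : ℝ} (hk0 : 0 ≤ k) (hk : 3 * k ^ 2 ≤ 4) (hs : 0 < s)
    (hks : k ≤ s) :
    2 * √(s ^ 2 - 1) - k ≤ 2 * s * √((s - k) / s) := by
  set y := (s - k) / s
  have hy0 : 0 ≤ y := div_nonneg (sub_nonneg.2 hks) hs.le
  have hsy : s * y = s - k := mul_div_cancel₀ _ hs.ne'
  have hy_le : y ≤ √y := Real.le_sqrt_of_sq_le (by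
    have : y ≤ 1 := (div_le_one hs).2 (by linarith)
    nlinarith)
  have hsq : s ^ 2 - 1 ≤ ((k + 2 * s * √y) / 2) ^ 2 :=
    calc s ^ 2 - 1 ≤ (4 * s ^ 2 - 3 * k ^ 2) / 4 := by linarith
      _ = (k ^ 2 + 4 * k * (s * y) + 4 * s * (s * y)) / 4 := by rw [hsy]; ring
      _ ≤ (k ^ 2 + 4 * k * (s * √y) + 4 * s * (s * y)) / 4 := by gcongr
      _ = (k ^ 2 + 4 * k * (s * √y) + 4 * s * (s * √y ^ 2)) / 4 := by rw [Real.sq_sqrt hy0]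
      _ = ((k + 2 * s * √y) / 2) ^ 2 := by ring
  linarith [Real.sqrt_le_iff.2 ⟨by positivity, hsq⟩]

/-- The bound on `k` comes from the case `k = √n`, where the claim reads
`2 * √(k ^ 2 - 1) ≤ (1 + 1 / d) * k`; letting `d → ∞` gives `3 * k ^ 2 ≤ 4`. -/
theorem Qfun_nonpos_general {d k n : ℝ} (hd : 0 < d) (hk0 : 0 ≤ k) (hk : 3 * k ^ 2 ≤ 4)
    (hn : 1 ≤ n) (hkn : k ≤ √n) :
    (d * (k - 2 * √(n - 1)) - k) * (((√n - k) / √n) ^ (1 / d) - 1) - 2 * k ≤ 0 := by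
  have hs : 0 < √n := by positivity
  have hsqrt := two_mul_sqrt_sq_sub_one_sub_le hk0 hk hs hkn
  rw [Real.sq_sqrt (by positivity)] at hsqrt
  set y := (√n - k) / √n with hy
  have hy0 : 0 ≤ y := div_nonneg (sub_nonneg.2 hkn) hs.le
  have hy1 : y ≤ 1 := (div_le_one hs).2 (by linarith)
  have hk_eq : √n * (1 - y) = k := by
    rw [hy]
    field_simp
    ring
  have hv : 0 ≤ 1 - y ^ (1 / d) := sub_nonneg.2 (Real.rpow_le_one hy0 hy1 (by positivity))
  have hmain : d * (2 * √(n - 1) - k) * (1 - y ^ (1 / d)) ≤ k * (1 + y ^ (1 / d)) :=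
    calc d * (2 * √(n - 1) - k) * (1 - y ^ (1 / d))
        ≤ d * (2 * √n * √y) * (1 - y ^ (1 / d)) := by gcongr
      _ = d * √n * (2 * √y * (1 - y ^ (1 / d))) := by ring
      _ ≤ d * √n * (1 / d * (1 - y) * (1 + y ^ (1 / d))) := by
          gcongr d * √n * ?_
          exact two_mul_sqrt_mul_one_sub_rpow_le (by positivity) hy0 hy1
      _ = √n * (1 - y) * (1 + y ^ (1 / d)) := by field_simp
      _ = k * (1 + y ^ (1 / d)) := by rw [hk_eq]
  linarith

/-- For every integer `d ≥ 2`, `0 < k < 1` and real `n ≥ 1`, `Q_{d,k}(n) ≤ 0`. -/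
theorem Qfun_nonpos (d : ℕ) (hd : 2 ≤ d) (k : ℝ) (hk0 : 0 < k) (hk1 : k < 1)
    (n : ℝ) (hn : 1 ≤ n) :
    Qfun d k n ≤ 0 :=
  Qfun_nonpos_general (by positivity) hk0.le (by nlinarith) hn
    (hk1.le.trans (Real.one_le_sqrt.2 hn))
end
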